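/- arXiv:2010.00478 — 3 statements merged into one kernel-verified Lean document; each statement's English description precedes it below -/
import Mathlib

section
/- Let k and d be non-negative integers with k ≤ d − 1, and let μ₁, …, μ_{k+1} be probability measures on ℝ^d, each absolutely continuous with respect to the Lebesgue measure. Then there exists a k-dimensional affine subspace V of ℝ^d such that for every closed half-space H with V ⊆ H and every i = 1, …, k + 1, one has μ_i(H) ≥ 1/(d − k + 1). -/
open MeasureTheory
open scoped RealInnerProductSpace

/-!
Let `m = d - k`. For an orthonormal `m`-frame `w`, Helly's theorem gives the projection of a
probability measure to the span of `w` a centre point of depth `1 / (m + 1)`. After smoothing the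
half-spaces by a cutoff of width `δ`, the centroid of the deep points weighted by their excess depth
is an approximate centre point. It depends continuously on `w`, and its `j`-th coordinate changes
sign with `w j` and is invariant under sign changes of the other `w i`.

The transversal is orthogonal to a frame `w` at which the `k + 1` approximate centre points agree.
Such a frame is a common zero of the `k` coordinate differences for each `j` and of the inner
products `⟪w j, w i⟫` with `i < j`, as functions on the product of the spheres of dimensions
`k, …, k + m - 1`. There are as many of these functions as angles. In hyperspherical coordinates
their signs label the vertices of a triangulated box whose facets are glued to themselves by
antipodal maps. The number of simplices at which all labels change is counted modulo 2 by a cup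
product of cocycles, which depends only on the symmetries of the functions, and it is `1` for a
standard choice of functions. Hence there are sign changes on arbitrarily fine grids and, by
compactness, a common zero. The theorem follows by letting `δ` tend to `0`.
-/

namespace CentralTransversal

open Finset

section Cochains

variable {X : Type*}

/-- The vertex sequence of the `i`-th face of a simplex. The vertices of a simplex are listed by
a sequence indexed by `ℕ`, of which only an initial segment is meaningful. -/
def face (i : ℕ) (v : ℕ → X) : ℕ → X := fun j => if j < i then v j else v (j + 1)

lemma face_of_lt {i j : ℕ} (v : ℕ → X) (h : j < i) : face i v j = v j := if_pos h

lemma face_of_le {i j : ℕ} (v : ℕ → X) (h : i ≤ j) : face i v j = v (j + 1) := if_neg h.not_gt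

lemma face_zero (v : ℕ → X) : face 0 v = fun j => v (j + 1) :=
  funext fun j => face_of_le v j.zero_le

lemma face_succ_comp_succ (i : ℕ) (v : ℕ → X) :
    (fun j => face (i + 1) v (j + 1)) = face i (fun j => v (j + 1)) := by
  funext j
  simp only [face, Nat.add_lt_add_iff_right]

/-- The mod 2 coboundary of an `n`-cochain. -/
def coboundary (n : ℕ) (F : (ℕ → X) → ZMod 2) (v : ℕ → X) : ZMod 2 :=
  ∑ i ∈ range (n + 2), F (face i v)

/-- The cup product `δs₁ ∪ ⋯ ∪ δsₙ` of the coboundaries of the 0-cochains in a list. -/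
def cupCoboundaries : List (X → ZMod 2) → (ℕ → X) → ZMod 2
  | [], _ => 1
  | s :: l, v => (s (v 0) + s (v 1)) * cupCoboundaries l (fun j => v (j + 1))

/-- The cochain `δs₁ ∪ ⋯ ∪ δsₚ ∪ u ∪ δt₁ ∪ ⋯ ∪ δt_q`, for `sᵢ` in the last list and `tᵢ` in the
first one; it is a primitive of `δs₁ ∪ ⋯ ∪ δsₚ ∪ δu ∪ δt₁ ∪ ⋯ ∪ δt_q`. -/
def cupPrimitive (u : X → ZMod 2) (l₂ : List (X → ZMod 2)) :
    List (X → ZMod 2) → (ℕ → X) → ZMod 2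
  | [], v => u (v 0) * cupCoboundaries l₂ v
  | s :: l₁, v => (s (v 0) + s (v 1)) * cupPrimitive u l₂ l₁ (fun j => v (j + 1))

lemma coboundary_cup_left (s : X → ZMod 2) (F : (ℕ → X) → ZMod 2) (n : ℕ) (v : ℕ → X) :
    coboundary (n + 1) (fun w => (s (w 0) + s (w 1)) * F (fun j => w (j + 1))) v =
      (s (v 0) + s (v 1)) * coboundary n F (fun j => v (j + 1)) := by
  have faces_ge_two (i : ℕ) : face (i + 2) v 0 = v 0 ∧ face (i + 2) v 1 = v 1 :=
    ⟨face_of_lt v (by omega), face_of_lt v (by omega)⟩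
  have face_one : face 1 v 0 = v 0 ∧ face 1 v 1 = v 2 := ⟨face_of_lt v one_pos, face_of_le v le_rfl⟩
  simp only [coboundary, sum_range_succ' _ (n + 2), sum_range_succ' _ (n + 1), zero_add,
    add_assoc, Nat.reduceAdd, face_succ_comp_succ _ v, faces_ge_two, face_one, face_zero]
  rw [mul_add, mul_sum]
  linear_combination F (fun j => v (j + 2)) * CharTwo.add_self_eq_zero (s (v 2))

lemma coboundary_cupCoboundaries (l : List (X → ZMod 2)) (v : ℕ → X) :
    coboundary l.length (cupCoboundaries l) v = 0 := by
  induction l generalizing v with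
  | nil => simpa [coboundary, cupCoboundaries] using CharTwo.two_eq_zero
  | cons s l ih =>
    exact (coboundary_cup_left s (cupCoboundaries l) l.length v).trans (by rw [ih, mul_zero])

lemma coboundary_cupPrimitive (u : X → ZMod 2) (l₁ l₂ : List (X → ZMod 2)) (v : ℕ → X) :
    coboundary (l₁.length + l₂.length) (cupPrimitive u l₂ l₁) v =
      cupCoboundaries (l₁ ++ u :: l₂) v := by
  induction l₁ generalizing v with
  | nil =>
    have closed := coboundary_cupCoboundaries l₂ v
    simp only [coboundary, cupPrimitive, cupCoboundaries, List.nil_append, List.length_nil,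
      zero_add, sum_range_succ' _ (l₂.length + 1), face_zero, face_of_lt v (Nat.succ_pos _),
      ← mul_sum] at closed ⊢
    linear_combination u (v 0) * closed - CharTwo.add_self_eq_zero
      (u (v 0) * cupCoboundaries l₂ (fun j => v (j + 1)))
  | cons s l₁ ih =>
    rw [List.length_cons, add_right_comm]
    exact (coboundary_cup_left s (cupPrimitive u l₂ l₁) _ v).trans (by rw [ih]; rfl)

lemma cupCoboundaries_append_add (l₁ l₂ : List (X → ZMod 2)) (s s' : X → ZMod 2) (v : ℕ → X) :
    cupCoboundaries (l₁ ++ (s + s') :: l₂) v =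
      cupCoboundaries (l₁ ++ s :: l₂) v + cupCoboundaries (l₁ ++ s' :: l₂) v := by
  induction l₁ generalizing v with
  | nil => simp only [List.nil_append, cupCoboundaries, Pi.add_apply]; ring
  | cons t l₁ ih => simp only [List.cons_append, cupCoboundaries, ih, mul_add]

lemma cupCoboundaries_ofFn {n : ℕ} (s : Fin n → X → ZMod 2) (v : ℕ → X) :
    cupCoboundaries (List.ofFn s) v = ∏ a : Fin n, (s a (v a) + s a (v (a + 1))) := by
  induction n generalizing v with
  | zero => rfl
  | succ n ih => simp [List.ofFn_succ, cupCoboundaries, ih, Fin.prod_univ_succ]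

lemma cupCoboundaries_congr {l : List (X → ZMod 2)} {v v' : ℕ → X}
    (h : ∀ s ∈ l, ∀ j < l.length, s (v' j) + s (v' (j + 1)) = s (v j) + s (v (j + 1))) :
    cupCoboundaries l v' = cupCoboundaries l v := by
  induction l generalizing v v' with
  | nil => rfl
  | cons s l ih =>
    simp only [List.mem_cons, List.length_cons, forall_eq_or_imp] at h
    rw [cupCoboundaries, cupCoboundaries, h.1 0 (by omega),
      ih fun t ht j hj => h.2 t ht (j + 1) (by omega)]

lemma cupPrimitive_congr {u : X → ZMod 2} {l₁ l₂ : List (X → ZMod 2)} {v v' : ℕ → X}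
    (hu : ∀ j ≤ l₁.length, u (v' j) = u (v j))
    (h : ∀ s ∈ l₁ ++ l₂, ∀ j < l₁.length + l₂.length,
      s (v' j) + s (v' (j + 1)) = s (v j) + s (v (j + 1))) :
    cupPrimitive u l₂ l₁ v' = cupPrimitive u l₂ l₁ v := by
  induction l₁ generalizing v v' with
  | nil =>
    rw [cupPrimitive, cupPrimitive, hu 0 le_rfl,
      cupCoboundaries_congr (l := l₂) fun s hs j hj => h s hs j (by simpa using hj)]
  | cons s l₁ ih =>
    simp only [List.cons_append, List.mem_cons, List.length_cons, forall_eq_or_imp] at h hu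
    rw [cupPrimitive, cupPrimitive, h.1 0 (by omega),
      ih (fun j hj => hu (j + 1) (by omega)) fun t ht j hj => h.2 t ht (j + 1) (by omega)]

end Cochains

section TriangulatedBox

variable {ι : Type*} {n : ℕ} {L : ℤ} {R : ι → Finset ι}

/-- The vertices of the simplex with order `e` in the unit cube with lowest corner `p`. Every edge
of the cube is directed from its even to its odd end, and the simplex follows the directions in the
order `e`. Unlike the usual staircase triangulation, the resulting triangulation of `ℝ^ι` is
invariant under the reflections `t ↦ L - t` with `L` even. -/
def vertex (p : ι → ℤ) (e : Fin n ≃ ι) (i : ℕ) : ι → ℤ :=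
  fun a => if (e.symm a : ℕ) < i then p a + 1 - p a % 2 else p a + p a % 2

lemma vertex_swap (p : ι → ℤ) (e : Fin (n + 1) ≃ ι) (i : Fin n) {j : ℕ} (hj : j ≠ i + 1) :
    vertex p ((Equiv.swap i.castSucc i.succ).trans e) j = vertex p e j := by
  have swap_lt (x : Fin (n + 1)) :
      (Equiv.swap i.castSucc i.succ x : ℕ) < j ↔ (x : ℕ) < j := by
    rw [Equiv.swap_apply_def]
    split_ifs with h h <;> subst_vars <;> simp <;> omega
  funext a
  simp only [vertex, Equiv.symm_trans_apply, Equiv.symm_swap, swap_lt]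

lemma vertex_last (p : ι → ℤ) (e : Fin (n + 1) ≃ ι) {j : ℕ} (hj : j ≤ n) :
    vertex p e j (e (Fin.last n)) = p (e (Fin.last n)) + p (e (Fin.last n)) % 2 := by
  simp [vertex, hj]

variable [DecidableEq ι]

/-- The reflection `t ↦ L - t` of the coordinates in `R`. -/
def reflect {A : Type*} [Sub A] (L : A) (R : Finset ι) (p : ι → A) : ι → A :=
  fun a => if a ∈ R then L - p a else p a

/-- The cell adjacent to `p` in direction `a` across its facet with odd `a`-coordinate. -/
def oddNeighbor (a : ι) (p : ι → ℤ) : ι → ℤ := Function.update p a (p a + 1 - 2 * (p a % 2))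

/-- The cell adjacent to `p` in direction `a` across its facet with even `a`-coordinate, after the
facets `{p a = 0}` and `{p a = L}` of the box have been glued to themselves by `reflect L R`. -/
def evenNeighbor (L : ℤ) (R : Finset ι) (a : ι) (p : ι → ℤ) : ι → ℤ :=
  if p a = 0 ∨ p a = L - 1 then reflect (L - 1) R p
  else Function.update p a (p a - 1 + 2 * (p a % 2))

/-- An `n`-cochain on the box `[0, L]^ι` which is compatible with the gluing of the facets
`{p a = 0}` and `{p a = L}` to themselves by `reflect L (R a)`. -/
structure IsGluedCochain (n : ℕ) (L : ℤ) (R : ι → Finset ι) (F : (ℕ → ι → ℤ) → ZMod 2) :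
    Prop where
  congr : ∀ v v' : ℕ → ι → ℤ, (∀ j ≤ n, v' j = v j) → F v' = F v
  reflect : ∀ a, ∀ v : ℕ → ι → ℤ, (∀ j ≤ n, v j a = 0 ∨ v j a = L) →
    (∀ j ≤ n, ∀ b, v j b ∈ Set.Icc 0 L) → F (fun j => reflect L (R a) (v j)) = F v

/-- A label of the lattice points of the box `[0, L]^ι` that changes by `χ a` under the gluing of
the facets `{p a = 0}` and `{p a = L}` to themselves by `reflect L (R a)`. -/
def IsEquivariantLabel (L : ℤ) (R : ι → Finset ι) (χ : ι → ZMod 2) (s : (ι → ℤ) → ZMod 2) :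
    Prop :=
  ∀ a, ∀ p : ι → ℤ, (p a = 0 ∨ p a = L) → (∀ b, p b ∈ Set.Icc 0 L) →
    s (reflect L (R a) p) = s p + χ a

lemma sum_eq_zero_of_involution {α : Type*} {s : Finset α} {f : α → ZMod 2} (g : α → α)
    (invariant : ∀ x ∈ s, f (g x) = f x) (ne_self : ∀ x ∈ s, g x ≠ x) (mem : ∀ x ∈ s, g x ∈ s)
    (involutive : ∀ x ∈ s, g (g x) = x) : ∑ x ∈ s, f x = 0 :=
  sum_involution (fun x _ => g x)
    (fun x hx => by rw [invariant x hx, CharTwo.add_self_eq_zero]) (fun x hx _ => ne_self x hx)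
    mem involutive

lemma evenNeighbor_ne (hL : 2 ∣ L) {a : ι} (ha : a ∈ R a) (p : ι → ℤ) :
    evenNeighbor L (R a) a p ≠ p := by
  refine fun h => ?_
  have := congrFun h a
  unfold evenNeighbor reflect at this
  split_ifs at this <;> simp_all <;> omega

lemma evenNeighbor_evenNeighbor (hL : 2 ∣ L) {a : ι} (ha : a ∈ R a) {p : ι → ℤ}
    (hp : p a ∈ Set.Ico 0 L) : evenNeighbor L (R a) a (evenNeighbor L (R a) a p) = p := by
  obtain ⟨hp0, hpL⟩ := hp
  by_cases h : p a = 0 ∨ p a = L - 1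
  · have reflected : evenNeighbor L (R a) a p = reflect (L - 1) (R a) p := if_pos h
    have on_boundary : reflect (L - 1) (R a) p a = 0 ∨ reflect (L - 1) (R a) p a = L - 1 := by
      simp only [reflect, ha, if_true]; omega
    rw [reflected, evenNeighbor, if_pos on_boundary]
    funext b
    simp only [reflect]
    split_ifs <;> omega
  · have interior : ¬ (p a - 1 + 2 * (p a % 2) = 0 ∨ p a - 1 + 2 * (p a % 2) = L - 1) := by omega
    simp only [evenNeighbor, if_neg h, Function.update_self, if_neg interior,
      Function.update_idem, Function.update_eq_self_iff]
    omega

lemma vertex_oddNeighbor (p : ι → ℤ) (e : Fin (n + 1) ≃ ι) (j : ℕ) :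
    vertex (oddNeighbor (e 0) p) e (j + 1) = vertex p e (j + 1) := by
  funext a
  rcases eq_or_ne a (e 0) with rfl | h
  · simp only [vertex, oddNeighbor, Equiv.symm_apply_apply, Fin.val_zero, Nat.succ_pos, if_true,
      Function.update_self]
    omega
  · simp only [vertex, oddNeighbor, Function.update_of_ne h]

lemma vertex_update_last (p : ι → ℤ) (e : Fin (n + 1) ≃ ι) {j : ℕ} (hj : j ≤ n) :
    vertex (Function.update p (e (Fin.last n))
      (p (e (Fin.last n)) - 1 + 2 * (p (e (Fin.last n)) % 2))) e j = vertex p e j := by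
  funext a
  rcases eq_or_ne a (e (Fin.last n)) with rfl | h
  · rw [vertex_last _ e hj, vertex_last _ e hj, Function.update_self]
    omega
  · simp only [vertex, Function.update_of_ne h]

lemma vertex_reflect (hL : 2 ∣ L) (R : Finset ι) (p : ι → ℤ) (e : Fin n ≃ ι) (j : ℕ) :
    vertex (reflect (L - 1) R p) e j = reflect L R (vertex p e j) := by
  funext a
  simp only [vertex, reflect]
  split_ifs <;> omega

lemma isGluedCochain_cupPrimitive {u : (ι → ℤ) → ZMod 2} {l₁ l₂ : List ((ι → ℤ) → ZMod 2)}
    (hu : IsEquivariantLabel L R 0 u) (hl : ∀ s ∈ l₁ ++ l₂, ∃ χ, IsEquivariantLabel L R χ s) :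
    IsGluedCochain (l₁.length + l₂.length) L R (cupPrimitive u l₂ l₁) where
  congr v v' h := cupPrimitive_congr (fun j hj => by rw [h j (by omega)])
    fun s _ j hj => by rw [h j (by omega), h (j + 1) (by omega)]
  reflect a v boundary box := cupPrimitive_congr
    (fun j hj => by simpa using hu a (v j) (boundary j (by omega)) (box j (by omega)))
    fun s hs j hj => by
      obtain ⟨χ, hχ⟩ := hl s hs
      rw [hχ a _ (boundary j (by omega)) (box j (by omega)),
        hχ a _ (boundary (j + 1) (by omega)) (box (j + 1) (by omega)), add_add_add_comm,
        CharTwo.add_self_eq_zero, add_zero]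

lemma IsEquivariantLabel.add {χ : ι → ZMod 2} {s s' : (ι → ℤ) → ZMod 2}
    (hs : IsEquivariantLabel L R χ s) (hs' : IsEquivariantLabel L R χ s') :
    IsEquivariantLabel L R 0 (s + s') := by
  intro a p boundary box
  rw [Pi.add_apply, hs a p boundary box, hs' a p boundary box, add_add_add_comm,
    CharTwo.add_self_eq_zero, Pi.add_apply, Pi.zero_apply]

variable [Fintype ι]

/-- The lowest corners of the unit cubes of the box `[0, L]^ι`. -/
noncomputable def cells (ι : Type*) [Fintype ι] [DecidableEq ι] (L : ℤ) : Finset (ι → ℤ) :=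
  Fintype.piFinset fun _ => Finset.Ico 0 L

lemma mem_cells {p : ι → ℤ} : p ∈ cells ι L ↔ ∀ a, p a ∈ Set.Ico 0 L := by
  simp [cells]

lemma oddNeighbor_mem_cells (hL : 2 ∣ L) {p : ι → ℤ} (hp : p ∈ cells ι L) (a : ι) :
    oddNeighbor a p ∈ cells ι L := by
  rw [mem_cells] at hp ⊢
  refine (Function.forall_update_iff p fun _ t => t ∈ Set.Ico 0 L).2 ⟨?_, fun b _ => hp b⟩
  obtain ⟨h0, hlt⟩ := hp a
  constructor <;> omega

lemma evenNeighbor_mem_cells (hL : 2 ∣ L) (R : Finset ι) {p : ι → ℤ} (hp : p ∈ cells ι L)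
    (a : ι) : evenNeighbor L R a p ∈ cells ι L := by
  rw [mem_cells] at hp ⊢
  unfold evenNeighbor
  split_ifs with h
  · intro b
    obtain ⟨h0, hlt⟩ := hp b
    unfold reflect
    split_ifs <;> constructor <;> omega
  · refine (Function.forall_update_iff p fun _ t => t ∈ Set.Ico 0 L).2 ⟨?_, fun b _ => hp b⟩
    obtain ⟨h0, hlt⟩ := hp a
    constructor <;> omega

lemma vertex_mem_Icc (hL : 2 ∣ L) {p : ι → ℤ} (hp : p ∈ cells ι L) (e : Fin n ≃ ι) (i : ℕ)
    (a : ι) : vertex p e i a ∈ Set.Icc 0 L := by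
  obtain ⟨h0, hlt⟩ := mem_cells.1 hp a
  unfold vertex
  split_ifs <;> constructor <;> omega

variable {F : (ℕ → ι → ℤ) → ZMod 2}

lemma sum_face_first (hL : 2 ∣ L) (F : (ℕ → ι → ℤ) → ZMod 2) (e : Fin (n + 1) ≃ ι) :
    ∑ p ∈ cells ι L, F (face 0 (vertex p e)) = 0 := by
  refine sum_eq_zero_of_involution (oddNeighbor (e 0)) (fun p _ => ?_) (fun p _ h => ?_)
    (fun p hp => oddNeighbor_mem_cells hL hp _) fun p _ => ?_
  · simp only [face_zero, vertex_oddNeighbor]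
  · rw [oddNeighbor, Function.update_eq_self_iff] at h
    omega
  · rw [oddNeighbor, oddNeighbor, Function.update_self, Function.update_idem,
      Function.update_eq_self_iff]
    omega

lemma sum_face_middle (hF : IsGluedCochain n L R F) (p : ι → ℤ) (i : Fin n) :
    ∑ e : Fin (n + 1) ≃ ι, F (face (i + 1) (vertex p e)) = 0 := by
  refine sum_eq_zero_of_involution (Equiv.swap i.castSucc i.succ).trans
    (fun e _ => hF.congr _ _ fun j _ => ?_) (fun e _ h => ?_) (fun e _ => mem_univ _) fun e _ => ?_
  · rcases lt_or_ge j (i + 1 : ℕ) with hj | hj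
    · rw [face_of_lt _ hj, face_of_lt _ hj, vertex_swap p e i hj.ne]
    · rw [face_of_le _ hj, face_of_le _ hj, vertex_swap p e i (by omega)]
  · have fixed := Equiv.congr_fun h i.castSucc
    rw [Equiv.trans_apply, Equiv.swap_apply_left, e.injective.eq_iff] at fixed
    exact i.castSucc_lt_succ.ne' fixed
  · ext x
    simp

lemma sum_face_last (hL : 2 ∣ L) (hR : ∀ a, a ∈ R a) (hF : IsGluedCochain n L R F)
    (e : Fin (n + 1) ≃ ι) :
    ∑ p ∈ cells ι L, F (face (n + 1) (vertex p e)) = 0 := by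
  have face_last (v : ℕ → ι → ℤ) : F (face (n + 1) v) = F v :=
    hF.congr _ _ fun j hj => face_of_lt v (by omega)
  simp only [face_last]
  set a := e (Fin.last n)
  refine sum_eq_zero_of_involution (evenNeighbor L (R a) a) (fun p hp => ?_)
    (fun p _ => evenNeighbor_ne hL (hR a) p) (fun p hp => evenNeighbor_mem_cells hL _ hp a)
    fun p hp => evenNeighbor_evenNeighbor hL (hR a) (mem_cells.1 hp a)
  by_cases h : p a = 0 ∨ p a = L - 1
  · rw [evenNeighbor, if_pos h, ← hF.reflect a (vertex p e)]
    · exact congrArg F (funext fun j => vertex_reflect hL (R a) p e j)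
    · intro j hj
      obtain ⟨hp0, hpL⟩ := mem_cells.1 hp a
      have even_end : vertex p e j a = p a + p a % 2 := vertex_last p e hj
      omega
    · exact fun j _ => vertex_mem_Icc hL hp e j
  · rw [evenNeighbor, if_neg h]
    exact hF.congr _ _ fun j hj => vertex_update_last p e hj

theorem sum_coboundary_eq_zero (hL : 2 ∣ L) (hR : ∀ a, a ∈ R a) (hF : IsGluedCochain n L R F) :
    ∑ p ∈ cells ι L, ∑ e : Fin (n + 1) ≃ ι, coboundary n F (vertex p e) = 0 := by
  have first : ∑ p ∈ cells ι L, ∑ e : Fin (n + 1) ≃ ι, F (face 0 (vertex p e)) = 0 := by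
    rw [sum_comm]
    exact sum_eq_zero fun e _ => sum_face_first hL F e
  have middle : ∑ p ∈ cells ι L, ∑ e : Fin (n + 1) ≃ ι, ∑ i ∈ range n,
      F (face (i + 1) (vertex p e)) = 0 := by
    refine sum_eq_zero fun p _ => ?_
    rw [sum_comm]
    exact sum_eq_zero fun i hi => sum_face_middle hF p ⟨i, mem_range.1 hi⟩
  have last : ∑ p ∈ cells ι L, ∑ e : Fin (n + 1) ≃ ι, F (face (n + 1) (vertex p e)) = 0 := by
    rw [sum_comm]
    exact sum_eq_zero fun e _ => sum_face_last hL hR hF e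
  simp only [coboundary, sum_range_succ, sum_range_succ' _ n, sum_add_distrib, first, middle,
    last, add_zero]

lemma sum_cupCoboundaries_replace (hL : 2 ∣ L) (hR : ∀ a, a ∈ R a) {χ : ι → ZMod 2}
    {s s' : (ι → ℤ) → ZMod 2} (hs : IsEquivariantLabel L R χ s)
    (hs' : IsEquivariantLabel L R χ s') {l₁ l₂ : List ((ι → ℤ) → ZMod 2)}
    (hl : ∀ t ∈ l₁ ++ l₂, ∃ χ, IsEquivariantLabel L R χ t)
    (hn : n = (l₁ ++ s :: l₂).length) :
    ∑ p ∈ cells ι L, ∑ e : Fin n ≃ ι, cupCoboundaries (l₁ ++ s :: l₂) (vertex p e) =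
      ∑ p ∈ cells ι L, ∑ e : Fin n ≃ ι, cupCoboundaries (l₁ ++ s' :: l₂) (vertex p e) := by
  obtain rfl : n = l₁.length + l₂.length + 1 := by
    simp only [hn, List.length_append, List.length_cons]
    omega
  rw [← CharTwo.add_eq_zero]
  simpa only [coboundary_cupPrimitive, cupCoboundaries_append_add, sum_add_distrib] using
    sum_coboundary_eq_zero hL hR (isGluedCochain_cupPrimitive (hs.add hs') hl)

lemma sum_cupCoboundaries_append_congr (hL : 2 ∣ L) (hR : ∀ a, a ∈ R a)
    {l l' : List ((ι → ℤ) → ZMod 2)}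
    (h : List.Forall₂
      (fun s s' => ∃ χ, IsEquivariantLabel L R χ s ∧ IsEquivariantLabel L R χ s') l l')
    {l₁ : List ((ι → ℤ) → ZMod 2)} (hl₁ : ∀ t ∈ l₁, ∃ χ, IsEquivariantLabel L R χ t)
    (hn : n = (l₁ ++ l).length) :
    ∑ p ∈ cells ι L, ∑ e : Fin n ≃ ι, cupCoboundaries (l₁ ++ l) (vertex p e) =
      ∑ p ∈ cells ι L, ∑ e : Fin n ≃ ι, cupCoboundaries (l₁ ++ l') (vertex p e) := by
  induction h generalizing l₁ with
  | nil => rfl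
  | @cons s s' l l' hs h ih =>
    obtain ⟨χ, hs, hs'⟩ := hs
    have hl : ∀ t ∈ l, ∃ χ, IsEquivariantLabel L R χ t := by
      intro t ht
      obtain ⟨i, hi, rfl⟩ := List.mem_iff_getElem.1 ht
      obtain ⟨χ, hχ, -⟩ := h.get hi (h.length_eq ▸ hi)
      exact ⟨χ, hχ⟩
    have tail := ih (l₁ := l₁ ++ [s'])
      (by simpa [or_imp, forall_and] using ⟨hl₁, χ, hs'⟩) (by simpa using hn)
    simp only [List.append_assoc, List.singleton_append] at tail
    rw [← tail]
    exact sum_cupCoboundaries_replace hL hR hs hs'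
      (by simpa [or_imp, forall_and] using ⟨hl₁, hl⟩) hn

theorem sum_prod_labels_congr (hL : 2 ∣ L) (hR : ∀ a, a ∈ R a) {χ : Fin n → ι → ZMod 2}
    {s s' : Fin n → (ι → ℤ) → ZMod 2} (hs : ∀ a, IsEquivariantLabel L R (χ a) (s a))
    (hs' : ∀ a, IsEquivariantLabel L R (χ a) (s' a)) :
    ∑ p ∈ cells ι L, ∑ e : Fin n ≃ ι, ∏ a : Fin n, (s a (vertex p e a) + s a (vertex p e (a + 1))) =
      ∑ p ∈ cells ι L, ∑ e : Fin n ≃ ι,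
        ∏ a : Fin n, (s' a (vertex p e a) + s' a (vertex p e (a + 1))) := by
  simp only [← cupCoboundaries_ofFn]
  refine sum_cupCoboundaries_append_congr hL hR (l₁ := []) (l := List.ofFn s)
    (l' := List.ofFn s') ?_ (by simp) (by rw [List.nil_append, List.length_ofFn])
  refine List.forall₂_iff_get.2 ⟨by simp only [List.length_ofFn], fun i hi _ => ?_⟩
  rw [List.length_ofFn] at hi
  simpa only [List.get_eq_getElem, List.getElem_ofFn] using
    ⟨χ ⟨i, hi⟩, hs ⟨i, hi⟩, hs' ⟨i, hi⟩⟩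

end TriangulatedBox

section CanonicalLabel

variable {m k n : ℕ} {K : ℤ}

/-- The end of `[0, 4K]` at which `x` lies, if any. -/
def endSide (K x : ℤ) : Option (ZMod 2) :=
  if x = 0 then some 0 else if x = 4 * K then some 1 else none

/-- The half of `[0, 4K]` in which `x` lies, if `x` is not its midpoint. -/
def middleSide (K x : ℤ) : Option (ZMod 2) :=
  if x < 2 * K then some 0 else if 2 * K < x then some 1 else none

/-- The sign of the `r`-th hyperspherical coordinate `cos θᵣ * ∏ l < r, sin θₗ`, where `θₗ` is
`π * x l / (4K)`. If the coordinate vanishes, then the first `cos θₗ` with `sin θₗ = 0` or with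
`l = r` and `cos θᵣ ≠ 0` determines the sign. -/
def signLabel (K : ℤ) (r : ℕ) {D : ℕ} (x : Fin D → ℤ) : ZMod 2 :=
  (Fin.findSome? fun l => if (l : ℕ) = r then middleSide K (x l) else endSide K (x l)).getD 0

lemma endSide_reflect (hK : 0 < K) (x : ℤ) :
    endSide K (4 * K - x) = (endSide K x).map (· + 1) := by
  unfold endSide
  split_ifs <;> first | omega | simp [CharTwo.add_self_eq_zero]

lemma middleSide_reflect (x : ℤ) : middleSide K (4 * K - x) = (middleSide K x).map (· + 1) := by
  unfold middleSide
  split_ifs <;> first | omega | simp [CharTwo.add_self_eq_zero]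

lemma endSide_of_near (hK : 0 < K) {x : ℤ} (hx : x ∈ Set.Icc (2 * K - 1) (2 * K + 1)) :
    endSide K x = none := by
  obtain ⟨hlo, hhi⟩ := hx
  rw [endSide, if_neg (by omega), if_neg (by omega)]

lemma findSome?_getD_add_one {D : ℕ} {f g : Fin D → Option (ZMod 2)} (i : Fin D)
    (hi : (f i).isSome) (hg : ∀ l ≤ i, g l = (f l).map (· + 1)) :
    (Fin.findSome? g).getD 0 = (Fin.findSome? f).getD 0 + 1 := by
  obtain ⟨c, hc⟩ := Option.isSome_iff_exists.1 (Fin.isSome_findSome?_iff.2 ⟨i, hi⟩)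
  obtain ⟨l, hl, first⟩ := Fin.findSome?_eq_some_iff.1 hc
  have hli : l ≤ i := not_lt.1 fun h => by simp [first i h] at hi
  have hgc : Fin.findSome? g = some (c + 1) := Fin.findSome?_eq_some_iff.2
    ⟨l, by rw [hg l hli, hl, Option.map_some],
      fun j hj => by rw [hg j (hj.le.trans hli), first j hj, Option.map_none]⟩
  rw [hgc, hc, Option.getD_some, Option.getD_some]

lemma signLabel_reflect (hK : 0 < K) (r : ℕ) {D : ℕ} {x y : Fin D → ℤ} {i : Fin D}
    (hx : x i = 0 ∨ x i = 4 * K) (hy : ∀ l ≤ i, y l = 4 * K - x l) :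
    signLabel K r y = signLabel K r x + 1 := by
  refine findSome?_getD_add_one i ?_ fun l hl => ?_
  · unfold endSide middleSide
    rcases hx with hx | hx <;> rw [hx] <;> split_ifs <;> first | rfl | omega
  · rw [hy l hl, endSide_reflect hK, middleSide_reflect]
    split_ifs <;> rfl

lemma signLabel_eq_zero_of_le (hK : 0 < K) {r D : ℕ} (hr : D ≤ r) {x : Fin D → ℤ}
    (hx : ∀ l, x l ∈ Set.Icc (2 * K - 1) (2 * K + 1)) : signLabel K r x = 0 := by
  rw [signLabel, Fin.findSome?_eq_none_iff.2, Option.getD_none]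
  intro l
  rw [if_neg (by omega), endSide_of_near hK (hx l)]

lemma signLabel_of_middleSide_eq_some (hK : 0 < K) {D : ℕ} {r : Fin D} {x : Fin D → ℤ}
    (hx : ∀ l < r, x l ∈ Set.Icc (2 * K - 1) (2 * K + 1)) {c : ZMod 2}
    (hc : middleSide K (x r) = some c) : signLabel K r x = c := by
  rw [signLabel, Fin.findSome?_eq_some_iff.2 ⟨r, by rwa [if_pos rfl], fun l hl => ?_⟩,
    Option.getD_some]
  rw [if_neg (Fin.val_ne_of_ne hl.ne), endSide_of_near hK (hx l hl)]

lemma signLabel_of_near (hK : 0 < K) {D : ℕ} (r : Fin D) {x : Fin D → ℤ}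
    (hx : ∀ l, x l ∈ Set.Icc (2 * K - 1) (2 * K + 1)) :
    signLabel K r x = if 2 * K < x r then 1 else 0 := by
  rcases lt_trichotomy (x r) (2 * K) with hlt | heq | hgt
  · rw [signLabel_of_middleSide_eq_some hK (fun l _ => hx l) (if_pos hlt), if_neg hlt.not_gt]
  · rw [signLabel, Fin.findSome?_eq_none_iff.2, Option.getD_none, if_neg heq.not_gt]
    intro l
    split_ifs with hl
    · rw [Fin.ext hl, middleSide, if_neg heq.not_lt, if_neg heq.not_gt]
    · exact endSide_of_near hK (hx l)
  · rw [signLabel_of_middleSide_eq_some hK (fun l _ => hx l)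
      ((if_neg hgt.not_gt).trans (if_pos hgt)), if_pos hgt]

/-- The index of an angle of a product of spheres of dimensions `k, …, k + m - 1`: the angle
`⟨j, l⟩` is the `l`-th hyperspherical coordinate of the point in the `j`-th sphere. -/
abbrev AngleIndex (m k : ℕ) := Σ j : Fin m, Fin (k + j)

/-- The angles of the point in the `j`-th sphere. -/
def anglesAt {A : Type*} (p : AngleIndex m k → A) (j : Fin m) : Fin (k + j) → A :=
  fun l => p ⟨j, l⟩

/-- The angles `θ` that have to be replaced by `π - θ` in order to get the antipode of the point in
the `q.1`-th sphere when `θ q` is `0` or `π`, so that the later angles do not matter. -/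
def reflectedAngles (q : AngleIndex m k) : Finset (AngleIndex m k) :=
  univ.filter fun q' => q'.1 = q.1 ∧ (q'.2 : ℕ) ≤ q.2

/-- Whether the test function with index `q` changes sign under the antipodal map of the `a.1`-th
sphere. The test functions with `q.2 < k` are odd in the `q.1`-th point only; the one with
`q.2 = k + i` is odd in the `q.1`-th and the `i`-th point, like their inner product. -/
abbrev Flips (q a : AngleIndex m k) : Prop := a.1 = q.1 ∨ k + a.1 = q.2

/-- The labelling of the lattice by the signs of the standard test functions on a product of
spheres: for `q.2 < k` the coordinate `q.2` of the `q.1`-th point, and for `q.2 = k + i` the product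
of this coordinate with the last coordinate of the `i`-th point. -/
def canonicalLabel (K : ℤ) (q : AngleIndex m k) (p : AngleIndex m k → ℤ) : ZMod 2 :=
  signLabel K q.2 (anglesAt p q.1) +
    Fin.addCases (fun _ => 0) (fun i => signLabel K q.2 (anglesAt p ⟨i, i.2.trans q.1.2⟩)) q.2

lemma self_mem_reflectedAngles (q : AngleIndex m k) : q ∈ reflectedAngles q := by
  simp [reflectedAngles]

lemma anglesAt_reflect_of_le {A : Type*} [Sub A] (L : A) (q : AngleIndex m k)
    (p : AngleIndex m k → A) {l : Fin (k + q.1)} (hl : l ≤ q.2) :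
    anglesAt (reflect L (reflectedAngles q) p) q.1 l = L - anglesAt p q.1 l :=
  if_pos (by simpa [reflectedAngles] using hl)

lemma anglesAt_reflect_of_ne {A : Type*} [Sub A] (L : A) {q : AngleIndex m k} {j : Fin m}
    (h : j ≠ q.1) (p : AngleIndex m k → A) :
    anglesAt (reflect L (reflectedAngles q) p) j = anglesAt p j :=
  funext fun _ => if_neg (by simp [reflectedAngles, h])

lemma signLabel_anglesAt_reflect (hK : 0 < K) (r : ℕ) (j : Fin m) {a : AngleIndex m k}
    {p : AngleIndex m k → ℤ} (hp : p a = 0 ∨ p a = 4 * K) :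
    signLabel K r (anglesAt (reflect (4 * K) (reflectedAngles a) p) j) =
      signLabel K r (anglesAt p j) + if a.1 = j then 1 else 0 := by
  split_ifs with h
  · subst h
    exact signLabel_reflect hK r hp fun l hl => anglesAt_reflect_of_le _ a p hl
  · rw [anglesAt_reflect_of_ne (4 * K) (Ne.symm h), add_zero]

lemma isEquivariantLabel_canonicalLabel (hK : 0 < K) (q : AngleIndex m k) :
    IsEquivariantLabel (4 * K) reflectedAngles (fun a => if Flips q a then 1 else 0)
      (canonicalLabel K q) := by
  obtain ⟨j, r⟩ := q
  intro a p hp _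
  induction r using Fin.addCases with
  | left r =>
    have first_only : Flips ⟨j, r.castAdd j⟩ a ↔ a.1 = j :=
      or_iff_left fun h : k + (a.1 : ℕ) = r => by omega
    simp only [canonicalLabel, Fin.addCases_left, signLabel_anglesAt_reflect hK _ _ hp,
      first_only]
    ring
  | right i =>
    have second_iff : k + (a.1 : ℕ) = Fin.natAdd k i ↔ a.1 = ⟨i, i.2.trans j.2⟩ := by
      rw [Fin.ext_iff, Fin.val_natAdd, add_right_inj]
    have exclusive : ¬ (a.1 = j ∧ a.1 = ⟨i, i.2.trans j.2⟩) := fun h =>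
      i.2.ne (congrArg Fin.val (h.2.symm.trans h.1))
    simp only [canonicalLabel, Fin.addCases_right, signLabel_anglesAt_reflect hK _ _ hp,
      Flips, second_iff]
    split_ifs <;> simp_all <;> ring

lemma canonicalLabel_eq_signLabel (hK : 0 < K) (q : AngleIndex m k) {p : AngleIndex m k → ℤ}
    (hp : ∀ q' : AngleIndex m k, q'.1 < q.1 → p q' ∈ Set.Icc (2 * K - 1) (2 * K + 1)) :
    canonicalLabel K q p = signLabel K q.2 (anglesAt p q.1) := by
  obtain ⟨j, r⟩ := q
  induction r using Fin.addCases with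
  | left r => simp only [canonicalLabel, Fin.addCases_left, add_zero]
  | right i =>
    have last_eq_zero : signLabel K (k + i) (anglesAt p ⟨i, i.2.trans j.2⟩) = 0 :=
      signLabel_eq_zero_of_le hK le_rfl fun l => hp ⟨⟨i, i.2.trans j.2⟩, l⟩ i.2
    simp only [canonicalLabel, Fin.addCases_right, Fin.val_natAdd, last_eq_zero, add_zero]

lemma vertex_mem_Icc_add_one {ι : Type*} (p : ι → ℤ) (e : Fin n ≃ ι) (i : ℕ) (a : ι) :
    vertex p e i a ∈ Set.Icc (p a) (p a + 1) := by
  unfold vertex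
  split_ifs <;> constructor <;> omega

lemma vertex_succ_of_ne {ι : Type*} (p : ι → ℤ) {e : Fin n ≃ ι} {i : Fin n} {a : ι}
    (h : e i ≠ a) : vertex p e (i + 1) a = vertex p e i a := by
  have : (e.symm a : ℕ) ≠ i := fun hi => h (e.symm_apply_eq.1 (Fin.ext hi)).symm
  have step : (e.symm a : ℕ) < i + 1 ↔ (e.symm a : ℕ) < i := by omega
  simp only [vertex, step]

lemma mem_Icc_of_canonicalLabel_ne (hK : 0 < K) {p : AngleIndex m k → ℤ}
    {e : Fin n ≃ AngleIndex m k}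
    (h : ∀ q, ∃ i i', canonicalLabel K q (vertex p e i) ≠ canonicalLabel K q (vertex p e i'))
    (q : AngleIndex m k) : p q ∈ Set.Icc (2 * K - 1) (2 * K) := by
  have near_of_mem {q' : AngleIndex m k} (hq' : p q' ∈ Set.Icc (2 * K - 1) (2 * K)) (i : ℕ) :
      vertex p e i q' ∈ Set.Icc (2 * K - 1) (2 * K + 1) :=
    Set.Icc_subset_Icc hq'.1 (by linarith [hq'.2]) (vertex_mem_Icc_add_one p e i q')
  obtain ⟨j, r⟩ := q
  induction j using WellFoundedLT.induction with | _ j previous_spheres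
  induction r using WellFoundedLT.induction with | _ r previous_angles
  have label_eq {c : ZMod 2} (hc : ∀ i, middleSide K (vertex p e i ⟨j, r⟩) = some c) (i : ℕ) :
      canonicalLabel K ⟨j, r⟩ (vertex p e i) = c := by
    rw [canonicalLabel_eq_signLabel hK _ fun q' hq' => near_of_mem (previous_spheres _ hq' _) i]
    exact signLabel_of_middleSide_eq_some hK (fun l hl => near_of_mem (previous_angles l hl) i)
      (hc i)
  have bounds (i : ℕ) := vertex_mem_Icc_add_one p e i ⟨j, r⟩
  by_contra hq
  obtain ⟨i, i', hne⟩ := h ⟨j, r⟩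
  rcases lt_or_ge (p ⟨j, r⟩) (2 * K - 1) with hlt | hge
  · have left (i : ℕ) : middleSide K (vertex p e i ⟨j, r⟩) = some 0 :=
      if_pos (by linarith [(bounds i).2])
    exact hne ((label_eq left i).trans (label_eq left i').symm)
  · have hgt : 2 * K < p ⟨j, r⟩ := not_le.1 fun hle => hq ⟨hge, hle⟩
    have right (i : ℕ) : middleSide K (vertex p e i ⟨j, r⟩) = some 1 :=
      (if_neg (by linarith [(bounds i).1])).trans (if_pos (by linarith [(bounds i).1]))
    exact hne ((label_eq right i).trans (label_eq right i').symm)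

lemma canonicalLabel_of_near (hK : 0 < K) (q : AngleIndex m k) {p : AngleIndex m k → ℤ}
    (hp : ∀ q', p q' ∈ Set.Icc (2 * K - 1) (2 * K + 1)) :
    canonicalLabel K q p = if 2 * K < p q then 1 else 0 :=
  (canonicalLabel_eq_signLabel hK q fun q' _ => hp q').trans
    (signLabel_of_near hK q.2 fun l => hp ⟨q.1, l⟩)

lemma canonicalLabel_vertex_middle_ne (hK : 0 < K) (e : Fin n ≃ AngleIndex m k) (a : Fin n) :
    canonicalLabel K (e a) (vertex (fun _ => 2 * K) e a) ≠
      canonicalLabel K (e a) (vertex (fun _ => 2 * K) e (a + 1)) := by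
  have near (i : ℕ) (q : AngleIndex m k) :
      vertex (fun _ => 2 * K) e i q ∈ Set.Icc (2 * K - 1) (2 * K + 1) :=
    Set.Icc_subset_Icc_left (by omega) (vertex_mem_Icc_add_one _ e i q)
  rw [canonicalLabel_of_near hK _ (near a), canonicalLabel_of_near hK _ (near (a + 1))]
  simp [vertex]

lemma eq_middle_of_canonicalLabel_ne (hK : 0 < K) {p : AngleIndex m k → ℤ}
    {e e' : Fin n ≃ AngleIndex m k}
    (h : ∀ a, canonicalLabel K (e a) (vertex p e' a) ≠
      canonicalLabel K (e a) (vertex p e' (a + 1))) :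
    p = (fun _ => 2 * K) ∧ e' = e := by
  have hp := mem_Icc_of_canonicalLabel_ne hK (p := p) (e := e') fun q =>
    ⟨e.symm q, e.symm q + 1, by simpa only [e.apply_symm_apply] using h (e.symm q)⟩
  have near (i : ℕ) (q : AngleIndex m k) : vertex p e' i q ∈ Set.Icc (2 * K - 1) (2 * K + 1) :=
    Set.Icc_subset_Icc (hp q).1 (by linarith [(hp q).2]) (vertex_mem_Icc_add_one p e' i q)
  simp only [canonicalLabel_of_near hK _ (near _)] at h
  have order_eq (a : Fin n) : e' a = e a := by
    by_contra hne
    exact h a (by rw [vertex_succ_of_ne p hne])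
  refine ⟨funext fun q => ?_, Equiv.ext order_eq⟩
  have changes := h (e.symm q)
  rw [e.apply_symm_apply] at changes
  by_contra hne
  have below (i : ℕ) : ¬ 2 * K < vertex p e' i q := by
    linarith [(vertex_mem_Icc_add_one p e' i q).2, lt_of_le_of_ne (hp q).2 hne]
  exact changes (by rw [if_neg (below _), if_neg (below _)])

lemma sum_prod_canonicalLabel_ne_zero (hK : 0 < K) (e : Fin n ≃ AngleIndex m k) :
    ∑ p ∈ cells (AngleIndex m k) (4 * K), ∑ e' : Fin n ≃ AngleIndex m k, ∏ a : Fin n,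
      (canonicalLabel K (e a) (vertex p e' a) + canonicalLabel K (e a) (vertex p e' (a + 1))) ≠
    0 := by
  have only_middle (p : AngleIndex m k → ℤ) (e' : Fin n ≃ AngleIndex m k)
      (h : ¬ (p = (fun _ => 2 * K) ∧ e' = e)) : ∏ a : Fin n, (canonicalLabel K (e a) (vertex p e' a)
        + canonicalLabel K (e a) (vertex p e' (a + 1))) = 0 := by
    contrapose! h
    refine eq_middle_of_canonicalLabel_ne hK fun a => ?_
    exact CharTwo.add_eq_zero.not.1 (prod_ne_zero_iff.1 h a (mem_univ a))
  rw [sum_eq_single_of_mem (fun _ => 2 * K), sum_eq_single_of_mem e (mem_univ e)]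
  · exact prod_ne_zero_iff.2 fun a _ =>
      CharTwo.add_eq_zero.not.2 (canonicalLabel_vertex_middle_ne hK e a)
  · exact fun e' _ he' => only_middle _ e' fun h => he' h.2
  · exact mem_cells.2 fun _ => ⟨by omega, by omega⟩
  · exact fun p _ hp => sum_eq_zero fun e' _ => only_middle p e' fun h => hp h.1

theorem exists_vertex_labels_ne (hK : 0 < K) (e : Fin n ≃ AngleIndex m k)
    {s : AngleIndex m k → (AngleIndex m k → ℤ) → ZMod 2}
    (hs : ∀ q, IsEquivariantLabel (4 * K) reflectedAngles (fun a => if Flips q a then 1 else 0)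
      (s q)) :
    ∃ p ∈ cells (AngleIndex m k) (4 * K), ∃ e' : Fin n ≃ AngleIndex m k, ∀ a,
      s (e a) (vertex p e' a) ≠ s (e a) (vertex p e' (a + 1)) := by
  have sum_ne_zero := (sum_prod_labels_congr (by omega) self_mem_reflectedAngles
    (fun a => hs (e a)) fun a => isEquivariantLabel_canonicalLabel hK (e a)).trans_ne
    (sum_prod_canonicalLabel_ne_zero hK e)
  obtain ⟨p, hp, hne⟩ := exists_ne_zero_of_sum_ne_zero sum_ne_zero
  obtain ⟨e', -, hne⟩ := exists_ne_zero_of_sum_ne_zero hne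
  exact ⟨p, hp, e', fun a => CharTwo.add_eq_zero.not.1 (prod_ne_zero_iff.1 hne a (mem_univ a))⟩

end CanonicalLabel

section CommonZeros

open Filter Topology

variable {m k : ℕ}

/-- The angles of the lattice point `p` of `[0, 4K]^ι` after rescaling to `[0, π]^ι`. -/
noncomputable def gridAngle {ι : Type*} (K : ℤ) (p : ι → ℤ) : ι → ℝ :=
  fun q => Real.pi * (p q / (4 * K))

lemma gridAngle_reflect {ι : Type*} [DecidableEq ι] {K : ℤ} (hK : K ≠ 0) (R : Finset ι)
    (p : ι → ℤ) : gridAngle K (reflect (4 * K) R p) = reflect Real.pi R (gridAngle K p) := by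
  have hK' : (K : ℝ) ≠ 0 := Int.cast_ne_zero.2 hK
  funext q
  simp only [gridAngle, reflect]
  split_ifs <;> push_cast <;> field_simp

lemma gridAngle_mem_Icc {ι : Type*} {K : ℤ} (hK : 0 < K) {p : ι → ℤ}
    (hp : ∀ q, p q ∈ Set.Icc 0 (4 * K)) : gridAngle K p ∈ Set.Icc 0 fun _ => Real.pi := by
  have hK' : (0 : ℝ) < 4 * K := by positivity
  refine ⟨fun q => ?_, fun q => mul_le_of_le_one_right Real.pi_pos.le ?_⟩
  · have : (0 : ℝ) ≤ p q := Int.cast_nonneg (hp q).1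
    exact mul_nonneg Real.pi_pos.le (by positivity)
  · rw [div_le_one hK']
    exact_mod_cast (hp q).2

lemma dist_gridAngle_vertex_le {ι : Type*} [Fintype ι] {n : ℕ} {K : ℤ} (hK : 0 < K) (p : ι → ℤ)
    (e : Fin n ≃ ι) (i : ℕ) :
    dist (gridAngle K p) (gridAngle K (vertex p e i)) ≤ Real.pi * (1 / K) := by
  have hK' : (0 : ℝ) < K := Int.cast_pos.2 hK
  refine (dist_pi_le_iff (by positivity)).2 fun q => ?_
  have unit_step : |(p q : ℝ) - vertex p e i q| ≤ 1 := by
    obtain ⟨hlo, hhi⟩ := vertex_mem_Icc_add_one p e i q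
    exact_mod_cast abs_le.2 ⟨by omega, by omega⟩
  rw [Real.dist_eq, gridAngle, gridAngle, ← mul_sub, ← sub_div, abs_mul, abs_div,
    abs_of_pos Real.pi_pos, abs_of_pos (by positivity : (0 : ℝ) < 4 * K)]
  gcongr
  linarith

/-- The sign of `g` at the lattice points, with ties broken by the canonical label. -/
noncomputable def tieBrokenSign (g : (AngleIndex m k → ℝ) → ℝ) (K : ℤ) (q : AngleIndex m k)
    (p : AngleIndex m k → ℤ) : ZMod 2 :=
  if 0 < g (gridAngle K p) then 0 else if g (gridAngle K p) < 0 then 1 else canonicalLabel K q p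

lemma mul_nonpos_of_tieBrokenSign_ne {g : (AngleIndex m k → ℝ) → ℝ} {K : ℤ} {q : AngleIndex m k}
    {p p' : AngleIndex m k → ℤ} (h : tieBrokenSign g K q p ≠ tieBrokenSign g K q p') :
    g (gridAngle K p) * g (gridAngle K p') ≤ 0 := by
  contrapose! h
  unfold tieBrokenSign
  rcases pos_and_pos_or_neg_and_neg_of_mul_pos h with ⟨hp, hp'⟩ | ⟨hp, hp'⟩
  · rw [if_pos hp, if_pos hp']
  · rw [if_neg hp.not_gt, if_pos hp, if_neg hp'.not_gt, if_pos hp']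

lemma isEquivariantLabel_tieBrokenSign {g : (AngleIndex m k → ℝ) → ℝ} {K : ℤ} (hK : 0 < K)
    {q : AngleIndex m k} (hg : ∀ a θ, θ a = 0 ∨ θ a = Real.pi →
      g (reflect Real.pi (reflectedAngles a) θ) = if Flips q a then -g θ else g θ) :
    IsEquivariantLabel (4 * K) reflectedAngles (fun a => if Flips q a then 1 else 0)
      (tieBrokenSign g K q) := by
  intro a p hp box
  have hK' : (4 * K : ℝ) ≠ 0 := by positivity
  have angle_boundary : gridAngle K p a = 0 ∨ gridAngle K p a = Real.pi := by
    refine hp.imp (fun h => ?_) fun h => ?_ <;> simp only [gridAngle, h]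
    · simp
    · push_cast
      rw [div_self hK', mul_one]
  simp only [tieBrokenSign, gridAngle_reflect hK.ne', hg a _ angle_boundary,
    isEquivariantLabel_canonicalLabel hK q a p hp box]
  split_ifs <;> first | linarith | simp [CharTwo.add_self_eq_zero]

variable {g : AngleIndex m k → (AngleIndex m k → ℝ) → ℝ}

lemma exists_near_sign_changes
    (hflip : ∀ q a θ, θ a = 0 ∨ θ a = Real.pi →
      g q (reflect Real.pi (reflectedAngles a) θ) = if Flips q a then -g q θ else g q θ)
    {K : ℤ} (hK : 0 < K) :
    ∃ θ ∈ Set.Icc 0 fun _ => Real.pi, ∀ q, ∃ x y, dist θ x ≤ Real.pi * (1 / K) ∧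
      dist θ y ≤ Real.pi * (1 / K) ∧ g q x * g q y ≤ 0 := by
  have e := (Fintype.equivFin (AngleIndex m k)).symm
  obtain ⟨p, hp, e', hne⟩ := exists_vertex_labels_ne hK e fun q =>
    isEquivariantLabel_tieBrokenSign hK (hflip q)
  have hp' (q) : p q ∈ Set.Icc 0 (4 * K) := Set.Ico_subset_Icc_self (mem_cells.1 hp q)
  refine ⟨gridAngle K p, gridAngle_mem_Icc hK hp', fun q => ?_⟩
  refine ⟨_, _, dist_gridAngle_vertex_le hK p e' _, dist_gridAngle_vertex_le hK p e' _,
    mul_nonpos_of_tieBrokenSign_ne (q := q) (p := vertex p e' (e.symm q))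
      (p' := vertex p e' (e.symm q + 1)) ?_⟩
  simpa only [e.apply_symm_apply] using hne (e.symm q)

theorem exists_common_zero (hg : ∀ q, Continuous (g q))
    (hflip : ∀ q a θ, θ a = 0 ∨ θ a = Real.pi →
      g q (reflect Real.pi (reflectedAngles a) θ) = if Flips q a then -g q θ else g q θ) :
    ∃ θ, ∀ q, g q θ = 0 := by
  choose θ θ_mem x y hx hy sign_change using fun N : ℕ =>
    exists_near_sign_changes hflip (K := N + 1) (by positivity)
  obtain ⟨θ₀, -, φ, hφ, hlim⟩ := isCompact_Icc.tendsto_subseq θ_mem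
  have mesh : Tendsto (fun N => Real.pi * (1 / ((φ N + 1 : ℤ) : ℝ))) atTop (𝓝 0) := by
    simpa using (tendsto_one_div_add_atTop_nhds_zero_nat.comp hφ.tendsto_atTop).const_mul Real.pi
  have limit_of_near {z : ℕ → AngleIndex m k → ℝ}
      (hz : ∀ N, dist (θ N) (z N) ≤ Real.pi * (1 / ((N + 1 : ℤ) : ℝ))) :
      Tendsto (fun N => z (φ N)) atTop (𝓝 θ₀) :=
    tendsto_of_tendsto_of_dist hlim (squeeze_zero (fun _ => dist_nonneg) (fun N => hz (φ N)) mesh)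
  refine ⟨θ₀, fun q => ?_⟩
  have square_nonpos : g q θ₀ * g q θ₀ ≤ 0 :=
    le_of_tendsto ((((hg q).tendsto θ₀).comp (limit_of_near fun N => hx N q)).mul
      (((hg q).tendsto θ₀).comp (limit_of_near fun N => hy N q)))
      (Eventually.of_forall fun N => sign_change (φ N) q)
  exact mul_self_eq_zero.1 (square_nonpos.antisymm (mul_self_nonneg _))

end CommonZeros

section OrthonormalFrames

variable {E : Type*} [NormedAddCommGroup E] [InnerProductSpace ℝ E] {m k : ℕ}

/-- The hyperspherical coordinates with angles `t 0, t 1, …`. -/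
noncomputable def sphericalCoord (t : ℕ → ℝ) (c : ℕ) : ℝ :=
  Real.cos (t c) * ∏ l ∈ range c, Real.sin (t l)

lemma sum_sphericalCoord_sq (t : ℕ → ℝ) (D : ℕ) :
    ∑ c ∈ range D, sphericalCoord t c ^ 2 = 1 - ∏ l ∈ range D, Real.sin (t l) ^ 2 := by
  induction D with
  | zero => simp
  | succ D ih =>
    rw [sum_range_succ, ih, prod_range_succ, sphericalCoord, mul_pow, Real.cos_sq', ← prod_pow]
    ring

lemma sphericalCoord_antipode {t t' : ℕ → ℝ} {i : ℕ} (hi : Real.sin (t i) = 0)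
    (ht' : ∀ l ≤ i, t' l = Real.pi - t l) (c : ℕ) :
    sphericalCoord t' c = -sphericalCoord t c := by
  have sin_eq {l : ℕ} (hl : l ≤ i) : Real.sin (t' l) = Real.sin (t l) := by
    rw [ht' l hl, Real.sin_pi_sub]
  unfold sphericalCoord
  rcases lt_or_ge i c with hic | hci
  · rw [prod_eq_zero (mem_range.2 hic) ((sin_eq le_rfl).trans hi),
      prod_eq_zero (mem_range.2 hic) hi, mul_zero, mul_zero, neg_zero]
  · rw [prod_congr rfl fun l hl => sin_eq ((mem_range.1 hl).le.trans hci), ht' c hci,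
      Real.cos_pi_sub, neg_mul]

/-- The point of the unit sphere with hyperspherical angles `x` with respect to the basis `b`.
All remaining angles are `0`, which makes it lie in the span of the first `D + 1` basis vectors. -/
noncomputable def spherePoint {N : ℕ} (b : OrthonormalBasis (Fin N) ℝ E) {D : ℕ}
    (x : Fin D → ℝ) : E :=
  b.repr.symm (WithLp.toLp 2 fun c => sphericalCoord (Function.extend Fin.val x 0) c)

lemma continuous_spherePoint {N : ℕ} (b : OrthonormalBasis (Fin N) ℝ E) (D : ℕ) :
    Continuous (spherePoint b : (Fin D → ℝ) → E) := by
  have angle (l : ℕ) : Continuous fun x : Fin D → ℝ => Function.extend Fin.val x 0 l := by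
    by_cases hl : l < D
    · have (x : Fin D → ℝ) : Function.extend Fin.val x 0 l = x ⟨l, hl⟩ :=
        Fin.val_injective.extend_apply x 0 ⟨l, hl⟩
      simpa only [this] using continuous_apply _
    · have (x : Fin D → ℝ) : Function.extend Fin.val x 0 l = 0 :=
        Function.extend_apply' x (0 : ℕ → ℝ) l fun ⟨i, hi⟩ => hl (hi ▸ i.2)
      simpa only [this] using continuous_const
  unfold spherePoint sphericalCoord
  fun_prop

lemma norm_spherePoint {N : ℕ} (b : OrthonormalBasis (Fin N) ℝ E) {D : ℕ} (hD : D < N)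
    (x : Fin D → ℝ) : ‖spherePoint b x‖ = 1 := by
  have angle_eq_zero : Function.extend Fin.val x 0 D = 0 :=
    Function.extend_apply' x (0 : ℕ → ℝ) D fun ⟨i, hi⟩ => i.2.ne hi
  rw [spherePoint, LinearIsometryEquiv.norm_map, EuclideanSpace.norm_eq, Real.sqrt_eq_one]
  simp only [Real.norm_eq_abs, sq_abs]
  rw [Fin.sum_univ_eq_sum_range (fun c => sphericalCoord (Function.extend Fin.val x 0) c ^ 2),
    sum_sphericalCoord_sq, prod_eq_zero (mem_range.2 hD) (by simp [angle_eq_zero]), sub_zero]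

lemma spherePoint_antipode {N : ℕ} (b : OrthonormalBasis (Fin N) ℝ E) {D : ℕ} {x y : Fin D → ℝ}
    {i : Fin D} (hi : Real.sin (x i) = 0) (hy : ∀ l ≤ i, y l = Real.pi - x l) :
    spherePoint b y = -spherePoint b x := by
  have extend_val (z : Fin D → ℝ) (l : Fin D) : Function.extend Fin.val z 0 l = z l :=
    Fin.val_injective.extend_apply z 0 l
  rw [spherePoint, spherePoint, ← map_neg]
  congr 1
  ext c
  refine sphericalCoord_antipode (i := i) (by rwa [extend_val]) (fun l hl => ?_) c
  have hlD : l < D := hl.trans_lt i.2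
  rw [extend_val y ⟨l, hlD⟩, extend_val x ⟨l, hlD⟩, hy ⟨l, hlD⟩ hl]

/-- The function `f` with the sign of its value at `j` changed. -/
def negAt {ι A : Type*} [DecidableEq ι] [Neg A] (j : ι) (f : ι → A) : ι → A :=
  Function.update f j (-f j)

lemma spherePoint_anglesAt_reflect {N : ℕ} (b : OrthonormalBasis (Fin N) ℝ E)
    {a : AngleIndex m k} {θ : AngleIndex m k → ℝ} (ha : θ a = 0 ∨ θ a = Real.pi) :
    (fun j => spherePoint b (anglesAt (reflect Real.pi (reflectedAngles a) θ) j)) =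
      negAt a.1 fun j => spherePoint b (anglesAt θ j) := by
  have sin_eq_zero : Real.sin (anglesAt θ a.1 a.2) = 0 :=
    ha.elim (fun h => by rw [anglesAt, h, Real.sin_zero]) fun h => by rw [anglesAt, h, Real.sin_pi]
  refine Function.eq_update_iff.2 ⟨?_, fun j hj => ?_⟩
  · exact spherePoint_antipode b sin_eq_zero fun l hl => anglesAt_reflect_of_le _ a θ hl
  · rw [anglesAt_reflect_of_ne _ hj]

/-- The test functions on tuples of vectors whose common zeros are the tuples of mutually
orthogonal vectors at which all `G j r` vanish. -/
noncomputable def testFunction (G : Fin m → Fin k → (Fin m → E) → ℝ) (q : AngleIndex m k)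
    (w : Fin m → E) : ℝ :=
  Fin.addCases (fun r => G q.1 r w) (fun i => ⟪w q.1, w ⟨i, i.2.trans q.1.2⟩⟫) q.2

lemma testFunction_negAt {G : Fin m → Fin k → (Fin m → E) → ℝ}
    (odd : ∀ j r w, G j r (negAt j w) = -G j r w)
    (even : ∀ j r w i, i ≠ j → G j r (negAt i w) = G j r w) (q a : AngleIndex m k)
    (w : Fin m → E) :
    testFunction G q (negAt a.1 w) =
      if Flips q a then -testFunction G q w else testFunction G q w := by
  obtain ⟨j, r⟩ := q
  induction r using Fin.addCases with
  | left r =>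
    have first_only : Flips ⟨j, r.castAdd j⟩ a ↔ a.1 = j :=
      or_iff_left fun h : k + (a.1 : ℕ) = r => by omega
    simp only [testFunction, Fin.addCases_left, first_only]
    split_ifs with h
    · rw [h, odd]
    · exact even j r w a.1 h
  | right i =>
    set i' : Fin m := ⟨i, i.2.trans j.2⟩
    have second_iff : k + (a.1 : ℕ) = Fin.natAdd k i ↔ a.1 = i' := by
      rw [Fin.ext_iff, Fin.val_natAdd, add_right_inj]
    have distinct : i' ≠ j := fun h => i.2.ne (congrArg Fin.val h)
    simp only [testFunction, Fin.addCases_right, Flips, second_iff]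
    change ⟪negAt a.1 w j, negAt a.1 w i'⟫ = if _ then -⟪w j, w i'⟫ else ⟪w j, w i'⟫
    rcases eq_or_ne a.1 j with rfl | hj
    · simp [negAt, distinct]
    rcases eq_or_ne a.1 i' with hi | hi
    · simp [negAt, hi, distinct.symm]
    · simp [negAt, hj, hi, hj.symm, hi.symm]

lemma continuous_testFunction_comp {X : Type*} [TopologicalSpace X]
    {G : Fin m → Fin k → (Fin m → E) → ℝ} {S : Set (Fin m → E)}
    (hG : ∀ j r, ContinuousOn (G j r) S) (q : AngleIndex m k) {w : X → Fin m → E}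
    (hw : Continuous w) (hwS : ∀ x, w x ∈ S) : Continuous fun x => testFunction G q (w x) := by
  obtain ⟨j, r⟩ := q
  induction r using Fin.addCases with
  | left r =>
    simp only [testFunction, Fin.addCases_left]
    exact (hG j r).comp_continuous hw hwS
  | right i =>
    simp only [testFunction, Fin.addCases_right]
    fun_prop

lemma orthonormal_of_testFunction_eq_zero {G : Fin m → Fin k → (Fin m → E) → ℝ} {w : Fin m → E}
    (norm_eq_one : ∀ j, ‖w j‖ = 1) (h : ∀ q : AngleIndex m k, testFunction G q w = 0) :
    Orthonormal ℝ w := by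
  have inner_eq_zero {i j : Fin m} (hij : i < j) : ⟪w j, w i⟫ = 0 := by
    simpa only [testFunction, Fin.addCases_right] using h ⟨j, Fin.natAdd k ⟨i, hij⟩⟩
  refine ⟨norm_eq_one, fun i j hij => ?_⟩
  rcases hij.lt_or_gt with hlt | hgt
  · rw [real_inner_comm, inner_eq_zero hlt]
  · exact inner_eq_zero hgt

theorem exists_orthonormal_forall_eq_zero (b : OrthonormalBasis (Fin (k + m)) ℝ E)
    {G : Fin m → Fin k → (Fin m → E) → ℝ}
    (hG : ∀ j r, ContinuousOn (G j r) {w | ∀ j, ‖w j‖ = 1})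
    (odd : ∀ j r w, G j r (negAt j w) = -G j r w)
    (even : ∀ j r w i, i ≠ j → G j r (negAt i w) = G j r w) :
    ∃ w : Fin m → E, Orthonormal ℝ w ∧ ∀ j r, G j r w = 0 := by
  let frame (θ : AngleIndex m k → ℝ) (j : Fin m) : E := spherePoint b (anglesAt θ j)
  have norm_frame (θ j) : ‖frame θ j‖ = 1 := norm_spherePoint b (by omega) _
  have continuous_frame : Continuous frame := continuous_pi fun j =>
    (continuous_spherePoint b _).comp (continuous_pi fun l => continuous_apply _)
  obtain ⟨θ, hθ⟩ := exists_common_zero (g := fun q θ => testFunction G q (frame θ))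
    (fun q => continuous_testFunction_comp hG q continuous_frame fun θ j => norm_frame θ j)
    fun q a θ ha => by
      simp only [frame, spherePoint_anglesAt_reflect b ha, testFunction_negAt odd even]
  refine ⟨frame θ, orthonormal_of_testFunction_eq_zero (norm_frame θ) hθ, fun j r => ?_⟩
  simpa only [testFunction, Fin.addCases_left] using hθ ⟨j, r.castAdd j⟩

end OrthonormalFrames

section SmoothedHalfspaces

open Filter Topology

lemma measure_setOf_measure_Iic_lt_le (ν : Measure ℝ) [IsFiniteMeasure ν] (c : ENNReal) :
    ν {z | ν (Set.Iic z) < c} ≤ c := by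
  have isLowerSet : IsLowerSet {z | ν (Set.Iic z) < c} := fun y z hzy hy =>
    (measure_mono (Set.Iic_subset_Iic.2 hzy)).trans_lt hy
  by_contra! h
  obtain ⟨K, hK, K_compact, hlt⟩ := isLowerSet.ordConnected.measurableSet.exists_lt_isCompact h
  have K_nonempty : K.Nonempty := nonempty_of_measure_ne_zero (bot_le.trans_lt hlt).ne'
  obtain ⟨z, hz, z_max⟩ := K_compact.exists_isGreatest K_nonempty
  exact (hlt.trans_le (measure_mono z_max)).not_gt (hK hz)

lemma tendsto_measure_lt_norm {F : Type*} [NormedAddCommGroup F] [CompleteSpace F]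
    [SecondCountableTopology F] [MeasurableSpace F] [BorelSpace F] (μ : Measure F)
    [IsFiniteMeasure μ] :
    Tendsto (fun R : ℝ => μ {x | R < ‖x‖}) atTop (𝓝 0) := by
  simpa using tendsto_measure_norm_gt_of_isTightMeasureSet (isTightMeasureSet_singleton (μ := μ))

/-- The piecewise linear cutoff which is `1` on `(-∞, 0]` and `0` on `[δ, ∞)`. -/
noncomputable def ramp (δ s : ℝ) : ℝ := max 0 (min 1 (1 - s / δ))

lemma continuous_ramp (δ : ℝ) : Continuous (ramp δ) := by unfold ramp; fun_prop

lemma ramp_nonneg (δ s : ℝ) : 0 ≤ ramp δ s := le_max_left _ _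

lemma ramp_le_one (δ s : ℝ) : ramp δ s ≤ 1 := max_le zero_le_one (min_le_left _ _)

lemma ramp_anti {δ : ℝ} (hδ : 0 < δ) : Antitone (ramp δ) := fun s t h => by unfold ramp; gcongr

lemma ramp_of_nonpos {δ s : ℝ} (hδ : 0 < δ) (hs : s ≤ 0) : ramp δ s = 1 := by
  have : s / δ ≤ 0 := div_nonpos_of_nonpos_of_nonneg hs hδ.le
  rw [ramp, min_eq_left (by linarith), max_eq_right zero_le_one]

lemma ramp_of_le {δ s : ℝ} (hδ : 0 < δ) (hs : δ ≤ s) : ramp δ s = 0 := by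
  have : 1 ≤ s / δ := (one_le_div hδ).2 hs
  exact max_eq_left ((min_le_right _ _).trans (by linarith))

lemma ramp_mono_width {δ δ' : ℝ} (hδ : 0 < δ) (h : δ ≤ δ') (s : ℝ) : ramp δ s ≤ ramp δ' s := by
  rcases le_total s 0 with hs | hs
  · rw [ramp_of_nonpos hδ hs, ramp_of_nonpos (hδ.trans_le h) hs]
  · unfold ramp
    gcongr

variable {E : Type*} [NormedAddCommGroup E] [InnerProductSpace ℝ E] [MeasurableSpace E]

/-- The `μ`-mass of the half-space `{x | ⟪x, v⟫ ≤ s}`, with the indicator function replaced by a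
cutoff of width `δ` to make it continuous in `v` and `s`. -/
noncomputable def smoothedMass (μ : Measure E) (δ : ℝ) (v : E) (s : ℝ) : ℝ :=
  ∫ x, ramp δ (⟪x, v⟫ - s) ∂μ

lemma smoothedMass_nonneg (μ : Measure E) (δ : ℝ) (v : E) (s : ℝ) : 0 ≤ smoothedMass μ δ v s :=
  integral_nonneg fun _ => ramp_nonneg _ _

variable [BorelSpace E] (μ : Measure E)

section FiniteMeasure

variable [IsFiniteMeasure μ]

lemma integrable_ramp_inner (δ : ℝ) (v : E) (s : ℝ) :
    Integrable (fun x => ramp δ (⟪x, v⟫ - s)) μ :=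
  Integrable.of_bound ((continuous_ramp δ).comp (by fun_prop)).aestronglyMeasurable 1
    (ae_of_all _ fun x => by
      rw [Real.norm_of_nonneg (ramp_nonneg _ _)]
      exact ramp_le_one _ _)

lemma continuous_smoothedMass (δ : ℝ) : Continuous fun p : E × ℝ => smoothedMass μ δ p.1 p.2 := by
  refine continuous_of_dominated (bound := fun _ => 1)
    (fun p => (integrable_ramp_inner μ δ p.1 p.2).1) (fun p => ae_of_all _ fun x => ?_)
    (integrable_const _) (ae_of_all _ fun x => (continuous_ramp δ).comp (by fun_prop))
  rw [Real.norm_of_nonneg (ramp_nonneg _ _)]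
  exact ramp_le_one _ _

lemma smoothedMass_mono {δ : ℝ} (hδ : 0 < δ) (v : E) : Monotone (smoothedMass μ δ v) :=
  fun s t h => integral_mono (integrable_ramp_inner μ δ v s) (integrable_ramp_inner μ δ v t)
    fun _ => ramp_anti hδ (sub_le_sub_left h _)

lemma smoothedMass_mono_width {δ δ' : ℝ} (hδ : 0 < δ) (h : δ ≤ δ') (v : E) (s : ℝ) :
    smoothedMass μ δ v s ≤ smoothedMass μ δ' v s :=
  integral_mono (integrable_ramp_inner μ δ v s) (integrable_ramp_inner μ δ' v s)
    fun _ => ramp_mono_width hδ h _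

lemma measure_le_ofReal_smoothedMass {δ : ℝ} (hδ : 0 < δ) (v : E) (s : ℝ) :
    μ {x | ⟪x, v⟫ ≤ s} ≤ ENNReal.ofReal (smoothedMass μ δ v s) := by
  have meas : MeasurableSet {x : E | ⟪x, v⟫ ≤ s} :=
    (isClosed_le (by fun_prop) continuous_const).measurableSet
  rw [← ofReal_measureReal, ← integral_indicator_one meas]
  refine ENNReal.ofReal_le_ofReal (integral_mono ((integrable_const (1 : ℝ)).indicator meas)
    (integrable_ramp_inner μ δ v s) fun x => Set.indicator_apply_le' (fun hx => ?_) fun _ => ?_)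
  · exact (ramp_of_nonpos hδ (sub_nonpos.2 hx)).ge
  · exact ramp_nonneg _ _

lemma ofReal_smoothedMass_le_measure {δ : ℝ} (hδ : 0 < δ) (v : E) (s : ℝ) :
    ENNReal.ofReal (smoothedMass μ δ v s) ≤ μ {x | ⟪x, v⟫ < s + δ} := by
  have meas : MeasurableSet {x : E | ⟪x, v⟫ < s + δ} :=
    (isOpen_lt (by fun_prop) continuous_const).measurableSet
  rw [← ofReal_measureReal, ← integral_indicator_one meas]
  refine ENNReal.ofReal_le_ofReal (integral_mono (integrable_ramp_inner μ δ v s)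
    ((integrable_const (1 : ℝ)).indicator meas) fun x => Set.le_indicator_apply (fun _ => ?_)
    fun hx => ?_)
  · exact ramp_le_one _ _
  · have hx' : s + δ ≤ ⟪x, v⟫ := not_lt.1 hx
    exact (ramp_of_le hδ (by linarith)).le

end FiniteMeasure

lemma measure_smoothedMass_inner_lt_le [IsFiniteMeasure μ] {δ : ℝ} (hδ : 0 < δ) (v : E) (κ : ℝ) :
    μ {y | smoothedMass μ δ v ⟪y, v⟫ < κ} ≤ ENNReal.ofReal κ := by
  have meas : Measurable fun x : E => ⟪x, v⟫ := by
    have : Continuous fun x : E => ⟪x, v⟫ := by fun_prop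
    exact this.measurable
  refine (measure_mono fun y hy => ?_).trans ((Measure.le_map_apply meas.aemeasurable _).trans
    (measure_setOf_measure_Iic_lt_le (μ.map fun x => ⟪x, v⟫) (ENNReal.ofReal κ)))
  change μ.map _ (Set.Iic ⟪y, v⟫) < ENNReal.ofReal κ
  rw [Measure.map_apply meas measurableSet_Iic]
  exact (measure_le_ofReal_smoothedMass μ hδ v ⟪y, v⟫).trans_lt
    ((ENNReal.ofReal_lt_ofReal_iff_of_nonneg (smoothedMass_nonneg _ _ _ _)).2 hy)

lemma exists_forall_le_smoothedMass_inner [IsProbabilityMeasure μ] {δ : ℝ} (hδ : 0 < δ)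
    {ι : Type*} (I : Finset ι) (v : ι → E) {κ R : ℝ}
    (hR : μ {x | R < ‖x‖} + #I * ENNReal.ofReal κ < 1) :
    ∃ y, ‖y‖ ≤ R ∧ ∀ i ∈ I, κ ≤ smoothedMass μ δ (v i) ⟪y, v i⟫ := by
  by_contra! h
  have cover : Set.univ ⊆ {x | R < ‖x‖} ∪ ⋃ i ∈ I, {y | smoothedMass μ δ (v i) ⟪y, v i⟫ < κ} :=
    fun y _ => (lt_or_ge R ‖y‖).imp id fun hy => by simpa using h y hy
  refine hR.not_ge ?_
  calc (1 : ENNReal) = μ Set.univ := measure_univ.symm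
    _ ≤ μ {x | R < ‖x‖} + ∑ i ∈ I, μ {y | smoothedMass μ δ (v i) ⟪y, v i⟫ < κ} :=
      (measure_mono cover).trans ((measure_union_le _ _).trans
        (add_le_add_right (measure_biUnion_finset_le _ _) _))
    _ ≤ μ {x | R < ‖x‖} + #I * ENNReal.ofReal κ := by
      gcongr
      rw [← nsmul_eq_mul]
      exact sum_le_card_nsmul _ _ _ fun i _ => measure_smoothedMass_inner_lt_le μ hδ (v i) κ

end SmoothedHalfspaces

section ApproxCenters

variable {E : Type*} [NormedAddCommGroup E] [InnerProductSpace ℝ E]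

lemma abs_real_inner_le_of_norm_le_one (x : E) {u : E} (hu : ‖u‖ ≤ 1) : |⟪x, u⟫| ≤ ‖x‖ :=
  (abs_real_inner_le_norm x u).trans (mul_le_of_le_one_right (norm_nonneg x) hu)

variable [MeasurableSpace E] {ι : Type*} [Fintype ι]

/-- For orthonormal `w`, the vector `t` gives the coordinates of a point of the span of `w` such
that every half-space with boundary through this point and normal in the span has smoothed mass at
least `κ`. The normals are normalized by the sup norm of their coordinates. -/
def IsApproxCenter (μ : Measure E) (δ κ : ℝ) (w : ι → E) (t : ι → ℝ) : Prop :=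
  ∀ a : ι → ℝ, ‖a‖ = 1 → κ ≤ smoothedMass μ δ (∑ j, a j • w j) (a ⬝ᵥ t)

variable [BorelSpace E] {μ : Measure E} {δ κ : ℝ}

section FiniteMeasure

variable [IsFiniteMeasure μ]

lemma continuous_smoothedMass_sum_dotProduct {X : Type*} [TopologicalSpace X] {w : X → ι → E}
    {t a : X → ι → ℝ} (hw : Continuous w) (ht : Continuous t) (ha : Continuous a) :
    Continuous fun x => smoothedMass μ δ (∑ j, a x j • w x j) (a x ⬝ᵥ t x) :=
  have normal : Continuous fun x => ∑ j, a x j • w x j := by fun_prop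
  (continuous_smoothedMass μ δ).comp (normal.prodMk (ha.dotProduct ht))

lemma isClosed_setOf_isApproxCenter :
    IsClosed {p : (ι → E) × (ι → ℝ) | IsApproxCenter μ δ κ p.1 p.2} := by
  simp only [IsApproxCenter, Set.ofPred_forall]
  exact isClosed_iInter fun a => isClosed_iInter fun _ => isClosed_le continuous_const
    (continuous_smoothedMass_sum_dotProduct continuous_fst continuous_snd continuous_const)

lemma convex_setOf_le_smoothedMass_dotProduct (hδ : 0 < δ) (v : E) (a : ι → ℝ) :
    Convex ℝ {t : ι → ℝ | κ ≤ smoothedMass μ δ v (a ⬝ᵥ t)} :=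
  have isUpperSet : IsUpperSet {s | κ ≤ smoothedMass μ δ v s} := fun _ _ hst hs =>
    hs.trans (smoothedMass_mono μ hδ v hst)
  isUpperSet.ordConnected.convex.is_linear_preimage
    ⟨dotProduct_add a, fun c t => dotProduct_smul c a t⟩

lemma convex_setOf_isApproxCenter (hδ : 0 < δ) (w : ι → E) :
    Convex ℝ {t | IsApproxCenter μ δ κ w t} := by
  simp only [IsApproxCenter, Set.ofPred_forall]
  exact convex_iInter₂ fun a _ => convex_setOf_le_smoothedMass_dotProduct hδ _ a

lemma IsApproxCenter.mono {δ' κ' : ℝ} {w : ι → E} {t : ι → ℝ} (h : IsApproxCenter μ δ κ w t)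
    (hδ : 0 < δ) (hδ' : δ ≤ δ') (hκ : κ' ≤ κ) : IsApproxCenter μ δ' κ' w t :=
  fun a ha => hκ.trans ((h a ha).trans (smoothedMass_mono_width μ hδ hδ' _ _))

lemma IsApproxCenter.norm_le {w : ι → E} {t : ι → ℝ} (h : IsApproxCenter μ δ κ w t) (hδ : 0 < δ)
    (hw : ∀ j, ‖w j‖ ≤ 1) {R : ℝ} (hR0 : 0 ≤ R) (hR : μ {x | R < ‖x‖} < ENNReal.ofReal κ) :
    ‖t‖ ≤ R + δ := by
  have exists_near {j : ι} {s : ℝ} (hs : |s| = 1) : ∃ x, ‖x‖ ≤ R ∧ s * ⟪x, w j⟫ < s * t j + δ := by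
    classical
    by_contra! hne
    have mass_le := h (Pi.single j s) (by rwa [Pi.norm_single])
    rw [Fintype.sum_eq_single j fun i hi => by rw [Pi.single_eq_of_ne hi, zero_smul],
      Pi.single_eq_same, single_dotProduct] at mass_le
    refine hR.not_ge ((ENNReal.ofReal_le_ofReal mass_le).trans
      ((ofReal_smoothedMass_le_measure μ hδ _ _).trans (measure_mono fun x hx => ?_)))
    rw [Set.mem_ofPred_eq, inner_smul_right] at hx
    exact lt_of_not_ge fun hxR => hx.not_ge (hne x hxR)
  have inner_le {x : E} (hx : ‖x‖ ≤ R) (j : ι) : |⟪x, w j⟫| ≤ R :=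
    (abs_real_inner_le_of_norm_le_one x (hw j)).trans hx
  refine (pi_norm_le_iff_of_nonneg (by positivity)).2 fun j => abs_le.2 ⟨?_, ?_⟩
  · obtain ⟨x, hx, hlt⟩ := exists_near (j := j) (s := 1) (by simp)
    linarith [(abs_le.1 (inner_le hx j)).1]
  · obtain ⟨x, hx, hlt⟩ := exists_near (j := j) (s := -1) (by simp)
    linarith [(abs_le.1 (inner_le hx j)).2]

end FiniteMeasure

theorem exists_isApproxCenter [IsProbabilityMeasure μ] (hδ : 0 < δ) {w : ι → E}
    (hw : ∀ j, ‖w j‖ ≤ 1) {R : ℝ}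
    (hR : μ {x | R < ‖x‖} + (Fintype.card ι + 1 : ℕ) * ENNReal.ofReal κ < 1) :
    ∃ t, ‖t‖ ≤ R ∧ IsApproxCenter μ δ κ w t := by
  let halfspace (a : ι → ℝ) : Set (ι → ℝ) := Metric.closedBall 0 R ∩
    {t | κ ≤ smoothedMass μ δ (∑ j, a j • w j) (a ⬝ᵥ t)}
  have halfspace_convex (a) : Convex ℝ (halfspace a) :=
    (convex_closedBall _ _).inter (convex_setOf_le_smoothedMass_dotProduct hδ _ a)
  have halfspace_compact (a) : IsCompact (halfspace a) :=
    (isCompact_closedBall _ _).inter_right (isClosed_le continuous_const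
      (continuous_smoothedMass_sum_dotProduct continuous_const continuous_id continuous_const))
  obtain ⟨t, ht⟩ := Convex.helly_theorem_compact' (𝕜 := ℝ) halfspace_convex halfspace_compact
    fun I hI => by
      rw [Module.finrank_fintype_fun_eq_card] at hI
      obtain ⟨y, hy, hmass⟩ := exists_forall_le_smoothedMass_inner μ hδ I
        (fun a => ∑ j, a j • w j) (κ := κ) (R := R) (lt_of_le_of_lt (by gcongr) hR)
      refine ⟨fun j => ⟪y, w j⟫, Set.mem_iInter₂.2 fun a ha => ⟨?_, ?_⟩⟩
      · refine mem_closedBall_zero_iff.2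
          ((pi_norm_le_iff_of_nonneg ((norm_nonneg y).trans hy)).2 fun j => ?_)
        exact (abs_real_inner_le_of_norm_le_one y (hw j)).trans hy
      · simpa only [Set.mem_ofPred_eq, dotProduct, inner_sum, inner_smul_right] using hmass a ha
  rw [Set.mem_iInter] at ht
  exact ⟨t, mem_closedBall_zero_iff.1 (ht 0).1, fun a _ => (ht a).2⟩

end ApproxCenters

section SignChanges

variable {ι : Type*} [DecidableEq ι]

lemma negAt_apply {A : Type*} [Neg A] (i : ι) (f : ι → A) (j : ι) :
    negAt i f j = if j = i then -f j else f j := by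
  rw [negAt, Function.update_apply]
  split_ifs with h
  · rw [h]
  · rfl

lemma negAt_negAt {A : Type*} [InvolutiveNeg A] (i : ι) (f : ι → A) : negAt i (negAt i f) = f := by
  simp [negAt]

variable [Fintype ι]

lemma norm_negAt {A : Type*} [SeminormedAddCommGroup A] (i : ι) (f : ι → A) :
    ‖negAt i f‖ = ‖f‖ := by
  have nnnorm_eq (j) : ‖negAt i f j‖₊ = ‖f j‖₊ := by
    rw [negAt_apply]
    split_ifs <;> simp
  simp only [Pi.norm_def, nnnorm_eq]

lemma sum_smul_negAt {R M : Type*} [Ring R] [AddCommGroup M] [Module R M] (i : ι) (a : ι → R)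
    (w : ι → M) : ∑ j, a j • negAt i w j = ∑ j, negAt i a j • w j :=
  sum_congr rfl fun j _ => by
    rw [negAt_apply, negAt_apply]
    split_ifs <;> simp

lemma measurePreserving_negAt (i : ι) : MeasurePreserving (negAt i : (ι → ℝ) → ι → ℝ) := by
  have coordinate (j : ι) : MeasurePreserving fun s : ℝ => if j = i then -s else s := by
    split_ifs
    · exact Measure.measurePreserving_neg volume
    · exact MeasurePreserving.id volume
  convert! volume_preserving_pi coordinate using 1
  exact funext₂ (negAt_apply i)

lemma setIntegral_closedBall_comp_negAt {F : Type*} [NormedAddCommGroup F] [NormedSpace ℝ F]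
    (i : ι) (R : ℝ) (f : (ι → ℝ) → F) :
    ∫ t in Metric.closedBall 0 R, f (negAt i t) = ∫ t in Metric.closedBall 0 R, f t := by
  have emb : MeasurableEmbedding (negAt i : (ι → ℝ) → ι → ℝ) :=
    (by unfold negAt; fun_prop : Continuous (negAt i : (ι → ℝ) → ι → ℝ)).measurableEmbedding
      (Function.LeftInverse.injective (negAt_negAt i))
  rw [← (measurePreserving_negAt i).setIntegral_preimage_emb emb f]
  congr 2
  ext t
  simp [norm_negAt]

lemma integral_negAt {X : Type*} [MeasurableSpace X] {ν : Measure X} {f : X → ι → ℝ}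
    (hf : Integrable f ν) (i : ι) : ∫ x, negAt i (f x) ∂ν = negAt i (∫ x, f x ∂ν) := by
  have integrable_eval := integrable_pi_iff.1 hf
  ext j
  rw [eval_integral fun j => ?_, negAt_apply, eval_integral integrable_eval]
  · simp only [negAt_apply]
    split_ifs
    · exact integral_neg _
    · rfl
  · simp only [negAt_apply]
    split_ifs
    · exact (integrable_eval j).neg
    · exact integrable_eval j

end SignChanges

lemma inv_integral_smul_integral_mem {X F : Type*} [MeasurableSpace X] {ν : Measure X}
    [NormedAddCommGroup F] [NormedSpace ℝ F] [CompleteSpace F] {S : Set F} (S_convex : Convex ℝ S)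
    (S_closed : IsClosed S) {ψ : X → ℝ} {f : X → F} (ψ_nonneg : 0 ≤ ψ)
    (ψ_pos : 0 < ∫ x, ψ x ∂ν) (hψf : Integrable (fun x => ψ x • f x) ν)
    (mem : ∀ x, ψ x ≠ 0 → f x ∈ S) : (∫ x, ψ x ∂ν)⁻¹ • ∫ x, ψ x • f x ∂ν ∈ S := by
  have hψ : Integrable ψ ν := by
    by_contra h
    exact ψ_pos.ne' (integral_undef h)
  let ρ := ν.withDensity fun x => ENNReal.ofReal (ψ x)
  have density_meas : AEMeasurable (fun x => ENNReal.ofReal (ψ x)) ν :=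
    hψ.1.aemeasurable.ennreal_ofReal
  have density_finite : ∀ᵐ x ∂ν, ENNReal.ofReal (ψ x) < ⊤ := by simp
  have toReal_density (x) : (ENNReal.ofReal (ψ x)).toReal = ψ x :=
    ENNReal.toReal_ofReal (ψ_nonneg x)
  have : IsFiniteMeasure ρ := isFiniteMeasure_withDensity_ofReal hψ.2
  have integral_eq : ∫ x, f x ∂ρ = ∫ x, ψ x • f x ∂ν := by
    rw [integral_withDensity_eq_integral_toReal_smul₀ density_meas density_finite]
    simp only [toReal_density]
  have mass_eq : ρ.real Set.univ = ∫ x, ψ x ∂ν := by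
    rw [measureReal_def, withDensity_apply _ .univ, Measure.restrict_univ,
      integral_eq_lintegral_of_nonneg_ae (.of_forall ψ_nonneg) hψ.1]
  have : NeZero ρ := ⟨fun h => ψ_pos.ne' (by rw [← mass_eq, h]; simp)⟩
  rw [← mass_eq, ← integral_eq, ← average_eq]
  refine S_convex.average_mem S_closed ?_ ?_
  · refine (ae_withDensity_iff' density_meas).2 (.of_forall fun x hx => mem x fun h => hx ?_)
    rw [h, ENNReal.ofReal_zero]
  · rw [integrable_withDensity_iff_integrable_smul₀' density_meas density_finite]
    simpa only [toReal_density] using hψf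

section SmoothedCenter

variable {E : Type*} [NormedAddCommGroup E] [InnerProductSpace ℝ E] [MeasurableSpace E]
  {ι : Type*} [Fintype ι]

/-- The smallest smoothed mass of a half-space with boundary through the point with coordinates `t`
and with normal in the span of `w`, a smoothed version of Tukey depth. -/
noncomputable def depth (μ : Measure E) (δ : ℝ) (w : ι → E) (t : ι → ℝ) : ℝ :=
  sInf ((fun a => smoothedMass μ δ (∑ j, a j • w j) (a ⬝ᵥ t)) '' Metric.sphere 0 1)

/-- The amount by which the depth of `t` exceeds the level `κ`, a continuous weight supported on
approximate centers of level `κ`. -/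
noncomputable def depthExcess (μ : Measure E) (δ κ : ℝ) (w : ι → E) (t : ι → ℝ) : ℝ :=
  max 0 (depth μ δ w t - κ)

/-- The centroid of the ball of radius `R` with density `depthExcess μ δ κ w`. Unlike an arbitrary
choice of an approximate center, it depends continuously on `w`. -/
noncomputable def smoothedCenter (μ : Measure E) (δ κ R : ℝ) (w : ι → E) : ι → ℝ :=
  (∫ t in Metric.closedBall 0 R, depthExcess μ δ κ w t)⁻¹ •
    ∫ t in Metric.closedBall 0 R, depthExcess μ δ κ w t • t

lemma isApproxCenter_negAt_iff [DecidableEq ι] {μ : Measure E} {δ κ : ℝ} (i : ι) (w : ι → E)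
    (t : ι → ℝ) : IsApproxCenter μ δ κ (negAt i w) (negAt i t) ↔ IsApproxCenter μ δ κ w t := by
  have dotProduct_negAt (a : ι → ℝ) : a ⬝ᵥ negAt i t = negAt i a ⬝ᵥ t := sum_smul_negAt i a t
  simp only [IsApproxCenter, sum_smul_negAt, dotProduct_negAt]
  refine ⟨fun h a ha => ?_, fun h a ha => h _ ((norm_negAt i a).trans ha)⟩
  simpa only [negAt_negAt] using h (negAt i a) ((norm_negAt i a).trans ha)

variable [BorelSpace E] {μ : Measure E} {δ κ R : ℝ}

section FiniteMeasure

variable [IsFiniteMeasure μ]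

lemma continuous_depthExcess :
    Continuous fun p : (ι → E) × (ι → ℝ) => depthExcess μ δ κ p.1 p.2 :=
  have depth_continuous : Continuous fun p : (ι → E) × (ι → ℝ) => depth μ δ p.1 p.2 :=
    (isCompact_sphere 0 1).continuous_sInf (continuous_smoothedMass_sum_dotProduct
      (continuous_fst.comp continuous_fst) (continuous_snd.comp continuous_fst) continuous_snd)
  continuous_const.max (depth_continuous.sub continuous_const)

lemma continuous_depthExcess_right (w : ι → E) : Continuous (depthExcess μ δ κ w) :=
  Continuous.uncurry_left (f := depthExcess μ δ κ) w continuous_depthExcess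

lemma integrableOn_closedBall_depthExcess_smul (w : ι → E) :
    IntegrableOn (fun t => depthExcess μ δ κ w t • t) (Metric.closedBall 0 R) :=
  ((continuous_depthExcess_right w).smul continuous_id).continuousOn.integrableOn_compact
    (isCompact_closedBall 0 R)

lemma continuousOn_smoothedCenter [LocallyCompactSpace E] {S : Set (ι → E)}
    (mass_pos : ∀ w ∈ S, 0 < ∫ t in Metric.closedBall 0 R, depthExcess μ δ κ w t) :
    ContinuousOn (smoothedCenter μ δ κ R) S := by
  have mass_continuous :
      Continuous fun w : ι → E => ∫ t in Metric.closedBall 0 R, depthExcess μ δ κ w t :=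
    continuous_parametric_integral_of_continuous continuous_depthExcess (isCompact_closedBall 0 R)
  have moment_continuous :
      Continuous fun w : ι → E => ∫ t in Metric.closedBall 0 R, depthExcess μ δ κ w t • t :=
    continuous_parametric_integral_of_continuous (continuous_depthExcess.smul continuous_snd)
      (isCompact_closedBall 0 R)
  exact (mass_continuous.continuousOn.inv₀ fun w hw => (mass_pos w hw).ne').smul
    moment_continuous.continuousOn

variable [Nonempty ι]

lemma le_depth_iff {w : ι → E} {t : ι → ℝ} : κ ≤ depth μ δ w t ↔ IsApproxCenter μ δ κ w t := by
  have mass_continuous : Continuous fun a : ι → ℝ => smoothedMass μ δ (∑ j, a j • w j) (a ⬝ᵥ t) :=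
    continuous_smoothedMass_sum_dotProduct continuous_const continuous_const continuous_id
  have sphere_nonempty : (Metric.sphere (0 : ι → ℝ) 1).Nonempty :=
    NormedSpace.sphere_nonempty.2 zero_le_one
  rw [depth, le_csInf_iff ((isCompact_sphere 0 1).image mass_continuous).bddBelow
    (sphere_nonempty.image _)]
  simp [IsApproxCenter]

lemma isApproxCenter_of_depthExcess_ne_zero {w : ι → E} {t : ι → ℝ}
    (h : depthExcess μ δ κ w t ≠ 0) : IsApproxCenter μ δ κ w t :=
  le_depth_iff.1 (le_of_not_gt fun hlt => h (max_eq_left (sub_nonpos.2 hlt.le)))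

lemma depthExcess_negAt [DecidableEq ι] (i : ι) (w : ι → E) (t : ι → ℝ) :
    depthExcess μ δ κ (negAt i w) (negAt i t) = depthExcess μ δ κ w t := by
  have depth_eq : depth μ δ (negAt i w) (negAt i t) = depth μ δ w t :=
    eq_of_forall_le_iff fun κ => by simp only [le_depth_iff, isApproxCenter_negAt_iff]
  rw [depthExcess, depthExcess, depth_eq]

lemma smoothedCenter_negAt [DecidableEq ι] (i : ι) (w : ι → E) :
    smoothedCenter μ δ κ R (negAt i w) = negAt i (smoothedCenter μ δ κ R w) := by
  have negAt_smul (c : ℝ) (t : ι → ℝ) : c • negAt i t = negAt i (c • t) := by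
    ext j
    simp [negAt_apply]
  rw [smoothedCenter, ← setIntegral_closedBall_comp_negAt i R,
    ← setIntegral_closedBall_comp_negAt i R fun t => _ • t]
  simp only [depthExcess_negAt, negAt_smul]
  rw [integral_negAt (integrableOn_closedBall_depthExcess_smul w), negAt_smul, smoothedCenter]

lemma isApproxCenter_smoothedCenter (hδ : 0 < δ) {w : ι → E}
    (mass_pos : 0 < ∫ t in Metric.closedBall 0 R, depthExcess μ δ κ w t) :
    IsApproxCenter μ δ κ w (smoothedCenter μ δ κ R w) :=
  have isClosed : IsClosed {t | IsApproxCenter μ δ κ w t} :=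
    isClosed_setOf_isApproxCenter.preimage (Continuous.prodMk_right w)
  inv_integral_smul_integral_mem (convex_setOf_isApproxCenter hδ w) isClosed
    (fun _ => le_max_left _ _) mass_pos
    (integrableOn_closedBall_depthExcess_smul w)
    fun _ => isApproxCenter_of_depthExcess_ne_zero

lemma integral_depthExcess_pos {κ' : ℝ} (hκ : κ < κ') {w : ι → E} {t : ι → ℝ} (ht : ‖t‖ < R)
    (h : IsApproxCenter μ δ κ' w t) :
    0 < ∫ t in Metric.closedBall 0 R, depthExcess μ δ κ w t := by
  have excess_pos : 0 < depthExcess μ δ κ w t :=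
    lt_max_of_lt_right (sub_pos.2 (hκ.trans_le (le_depth_iff.2 h)))
  have excess_nonneg : 0 ≤ depthExcess μ δ κ w := fun _ => le_max_left _ _
  rw [setIntegral_pos_iff_support_of_nonneg_ae (.of_forall excess_nonneg)
    ((continuous_depthExcess_right w).continuousOn.integrableOn_compact (isCompact_closedBall 0 R))]
  have isOpen : IsOpen (Function.support (depthExcess μ δ κ w) ∩ Metric.ball 0 R) :=
    (continuous_depthExcess_right w).isOpen_support.inter Metric.isOpen_ball
  exact (isOpen.measure_pos volume ⟨t, excess_pos.ne', mem_ball_zero_iff.2 ht⟩).trans_le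
    (measure_mono (Set.inter_subset_inter_right _ Metric.ball_subset_closedBall))

end FiniteMeasure

theorem exists_continuousOn_isApproxCenter [FiniteDimensional ℝ E] [IsProbabilityMeasure μ]
    [DecidableEq ι] [Nonempty ι] (hδ : 0 < δ) (hκ : κ < 1 / (Fintype.card ι + 1)) :
    ∃ c : (ι → E) → ι → ℝ, ContinuousOn c {w | ∀ j, ‖w j‖ = 1} ∧
      (∀ i w, c (negAt i w) = negAt i (c w)) ∧
      ∀ w, (∀ j, ‖w j‖ = 1) → IsApproxCenter μ δ κ w (c w) := by
  obtain ⟨κ', hκκ', hκ'⟩ := exists_between hκ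
  have card_mul_lt : (Fintype.card ι + 1 : ℕ) * ENNReal.ofReal κ' < 1 := by
    rw [← ENNReal.ofReal_natCast, ← ENNReal.ofReal_mul (by positivity), ENNReal.ofReal_lt_one]
    rw [lt_div_iff₀' (by positivity)] at hκ'
    exact_mod_cast hκ'
  obtain ⟨R, hR⟩ := ((tendsto_measure_lt_norm μ).eventually
    (gt_mem_nhds (tsub_pos_iff_lt.2 card_mul_lt))).exists
  have mass_pos (w : ι → E) (hw : ∀ j, ‖w j‖ = 1) :
      0 < ∫ t in Metric.closedBall 0 (R + 1), depthExcess μ δ κ w t := by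
    obtain ⟨t, ht, h⟩ := exists_isApproxCenter hδ (fun j => (hw j).le) (lt_tsub_iff_right.1 hR)
    exact integral_depthExcess_pos hκκ' (by linarith) h
  exact ⟨smoothedCenter μ δ κ (R + 1), continuousOn_smoothedCenter mass_pos,
    smoothedCenter_negAt, fun w hw => isApproxCenter_smoothedCenter hδ (mass_pos w hw)⟩

end SmoothedCenter

section Transversal

open Filter Topology

variable {E : Type*} [NormedAddCommGroup E] [InnerProductSpace ℝ E]

lemma isClosed_setOf_orthonormal {ι : Type*} : IsClosed {w : ι → E | Orthonormal ℝ w} := by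
  classical
  simp only [orthonormal_iff_ite, Set.ofPred_forall]
  exact isClosed_iInter fun i => isClosed_iInter fun j =>
    isClosed_eq (by fun_prop) continuous_const

lemma mem_and_inner_le_of_mk'_orthogonal_subset {S : Submodule ℝ E} [S.HasOrthogonalProjection]
    {p v : E} {α : ℝ} (h : (AffineSubspace.mk' p Sᗮ : Set E) ⊆ {x | ⟪x, v⟫ ≤ α}) :
    v ∈ S ∧ ⟪p, v⟫ ≤ α := by
  have inner_add_le {u : E} (hu : u ∈ Sᗮ) : ⟪u, v⟫ + ⟪p, v⟫ ≤ α := by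
    rw [← inner_add_left]
    exact h (AffineSubspace.vadd_mem_mk' p hu)
  refine ⟨?_, by simpa using inner_add_le (zero_mem Sᗮ)⟩
  rw [← S.orthogonal_orthogonal, Submodule.mem_orthogonal]
  intro u hu
  by_contra hne
  have := inner_add_le (Sᗮ.smul_mem ((α - ⟪p, v⟫ + 1) / ⟪u, v⟫) hu)
  rw [real_inner_smul_left, div_mul_cancel₀ _ hne] at this
  linarith

variable [MeasurableSpace E] [BorelSpace E]

section Limit

variable {ι : Type*} [Fintype ι]

lemma ofReal_le_measure_of_eventually_isApproxCenter {μ : Measure E} [IsFiniteMeasure μ] {τ : ℝ}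
    {w : ι → E} {t a : ι → ℝ} (h : ∀ᶠ ε in 𝓝[>] 0, IsApproxCenter μ ε (τ - ε) w t)
    (ha : ‖a‖ = 1) : ENNReal.ofReal τ ≤ μ {x | ⟪x, ∑ j, a j • w j⟫ ≤ a ⬝ᵥ t} := by
  set v := ∑ j, a j • w j
  have tendsto_mass : Tendsto (fun ε => μ {x | ⟪x, v⟫ ≤ a ⬝ᵥ t + ε}) (𝓝[>] 0)
      (𝓝 (μ {x | ⟪x, v⟫ ≤ a ⬝ᵥ t})) := by
    have inter_eq : ⋂ ε > 0, {x | ⟪x, v⟫ ≤ a ⬝ᵥ t + ε} = {x | ⟪x, v⟫ ≤ a ⬝ᵥ t} := by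
      ext x
      simp only [Set.mem_iInter₂, Set.mem_ofPred_eq]
      exact le_iff_forall_pos_le_add.symm
    rw [← inter_eq]
    refine tendsto_measure_biInter_gt (fun ε _ => ?_) (fun ε ε' _ hε x hx => ?_)
      ⟨1, one_pos, measure_ne_top _ _⟩
    · exact (measurableSet_le (by fun_prop) measurable_const).nullMeasurableSet
    · exact le_trans (b := a ⬝ᵥ t + ε) hx (by gcongr)
  have tendsto_level : Tendsto (fun ε => ENNReal.ofReal (τ - ε)) (𝓝[>] 0)
      (𝓝 (ENNReal.ofReal τ)) := by
    have : Continuous fun ε => ENNReal.ofReal (τ - ε) :=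
      ENNReal.continuous_ofReal.comp (continuous_const.sub continuous_id)
    simpa using (this.tendsto 0).mono_left nhdsWithin_le_nhds
  refine le_of_tendsto_of_tendsto tendsto_level tendsto_mass ?_
  filter_upwards [h, self_mem_nhdsWithin] with ε hε ε_pos
  calc ENNReal.ofReal (τ - ε) ≤ ENNReal.ofReal (smoothedMass μ ε v (a ⬝ᵥ t)) :=
        ENNReal.ofReal_le_ofReal (hε a ha)
    _ ≤ μ {x | ⟪x, v⟫ < a ⬝ᵥ t + ε} := ofReal_smoothedMass_le_measure μ ε_pos _ _
    _ ≤ μ {x | ⟪x, v⟫ ≤ a ⬝ᵥ t + ε} := measure_mono fun x => le_of_lt (α := ℝ)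

variable {I : Type*} (μ : I → Measure E) [∀ i, IsFiniteMeasure (μ i)]

lemma isClosed_setOf_orthonormal_isApproxCenter (δ κ : ℝ) : IsClosed
    {p : (ι → E) × (ι → ℝ) | Orthonormal ℝ p.1 ∧ ∀ i, IsApproxCenter (μ i) δ κ p.1 p.2} := by
  simp only [Set.ofPred_and, Set.ofPred_forall]
  exact (isClosed_setOf_orthonormal.preimage continuous_fst).inter
    (isClosed_iInter fun i => isClosed_setOf_isApproxCenter)

variable [FiniteDimensional ℝ E] [Nonempty I]

lemma isCompact_setOf_orthonormal_isApproxCenter {δ κ : ℝ} (hδ : 0 < δ) (hκ : 0 < κ) : IsCompact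
    {p : (ι → E) × (ι → ℝ) | Orthonormal ℝ p.1 ∧ ∀ i, IsApproxCenter (μ i) δ κ p.1 p.2} := by
  obtain ⟨i₀⟩ := ‹Nonempty I›
  obtain ⟨R, hR, hR0⟩ := (((tendsto_measure_lt_norm (μ i₀)).eventually
    (gt_mem_nhds (ENNReal.ofReal_pos.2 hκ))).and (eventually_ge_atTop 0)).exists
  refine ((isCompact_closedBall 0 1).prod (isCompact_closedBall 0 (R + δ))).of_isClosed_subset
    (isClosed_setOf_orthonormal_isApproxCenter μ δ κ) fun p ⟨hw, hp⟩ => ⟨?_, ?_⟩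
  · exact mem_closedBall_zero_iff.2 ((pi_norm_le_iff_of_nonneg zero_le_one).2 fun j => (hw.1 j).le)
  · exact mem_closedBall_zero_iff.2 ((hp i₀).norm_le hδ (fun j => (hw.1 j).le) hR0 hR)

lemma exists_orthonormal_eventually_isApproxCenter {τ : ℝ} (hτ : 0 < τ)
    (h : ∀ ε > 0, ∃ w : ι → E, Orthonormal ℝ w ∧
      ∃ t, ∀ i, IsApproxCenter (μ i) ε (τ - ε) w t) :
    ∃ w : ι → E, Orthonormal ℝ w ∧
      ∃ t, ∀ i, ∀ᶠ ε in 𝓝[>] 0, IsApproxCenter (μ i) ε (τ - ε) w t := by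
  have : Nonempty (Set.Ioo 0 τ) := (Set.nonempty_Ioo.2 hτ).to_subtype
  let centers (ε : Set.Ioo 0 τ) : Set ((ι → E) × (ι → ℝ)) :=
    {p | Orthonormal ℝ p.1 ∧ ∀ i, IsApproxCenter (μ i) ε (τ - ε) p.1 p.2}
  have centers_mono : Monotone centers := fun ε ε' hε p ⟨hw, hp⟩ =>
    ⟨hw, fun i => (hp i).mono ε.2.1 hε (sub_le_sub_left (α := ℝ) hε τ)⟩
  obtain ⟨p, hp⟩ := IsCompact.nonempty_iInter_of_directed_nonempty_isCompact_isClosed centers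
    centers_mono.directed_ge
    (fun ε => let ⟨w, hw, t, ht⟩ := h ε ε.2.1; ⟨(w, t), hw, ht⟩)
    (fun ε => isCompact_setOf_orthonormal_isApproxCenter μ ε.2.1 (sub_pos.2 ε.2.2))
    fun ε => isClosed_setOf_orthonormal_isApproxCenter μ _ _
  rw [Set.mem_iInter] at hp
  refine ⟨p.1, (hp (Classical.arbitrary _)).1, p.2, fun i => ?_⟩
  filter_upwards [Ioo_mem_nhdsGT hτ] with ε hε using (hp ⟨ε, hε⟩).2 i

end Limit

variable {k m : ℕ} [NeZero m] (μ : Fin (k + 1) → Measure E)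
  [∀ i, IsProbabilityMeasure (μ i)]

theorem exists_orthonormal_isApproxCenter (b : OrthonormalBasis (Fin (k + m)) ℝ E) {δ κ : ℝ}
    (hδ : 0 < δ) (hκ : κ < 1 / (m + 1)) :
    ∃ w : Fin m → E, Orthonormal ℝ w ∧ ∃ t, ∀ i, IsApproxCenter (μ i) δ κ w t := by
  have : FiniteDimensional ℝ E := b.toBasis.finiteDimensional_of_finite
  choose c c_continuous c_negAt hc using fun i => exists_continuousOn_isApproxCenter
    (μ := μ i) (ι := Fin m) hδ (by simpa using hκ)
  obtain ⟨w, hw, eq_zero⟩ := exists_orthonormal_forall_eq_zero b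
    (G := fun j r w => c r.succ w j - c 0 w j)
    (fun j r => ((continuous_apply j).comp_continuousOn (c_continuous _)).sub
      ((continuous_apply j).comp_continuousOn (c_continuous _)))
    (fun j r w => by simp only [c_negAt, negAt_apply, if_true]; ring)
    (fun j r w i hij => by simp only [c_negAt, negAt_apply, hij.symm, if_false])
  have centers_eq (i) : c i w = c 0 w := by
    refine Fin.cases rfl (fun r => ?_) i
    ext j
    exact sub_eq_zero.1 (eq_zero j r)
  exact ⟨w, hw, c 0 w, fun i => centers_eq i ▸ hc i w hw.1⟩

theorem exists_submodule_forall_le_measure_halfspace (b : OrthonormalBasis (Fin (k + m)) ℝ E) :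
    ∃ (S : Submodule ℝ E) (p : E), Module.finrank ℝ S = m ∧ ∀ v ∈ S, v ≠ 0 → ∀ i,
      1 / ((m + 1 : ℕ) : ENNReal) ≤ μ i {x | ⟪x, v⟫ ≤ ⟪p, v⟫} := by
  have : FiniteDimensional ℝ E := b.toBasis.finiteDimensional_of_finite
  obtain ⟨w, hw, t, ht⟩ := exists_orthonormal_eventually_isApproxCenter μ
    (by positivity : (0 : ℝ) < 1 / (m + 1))
    fun ε hε => exists_orthonormal_isApproxCenter μ b hε (sub_lt_self _ hε)
  refine ⟨Submodule.span ℝ (Set.range w), ∑ j, t j • w j, ?_, fun v hv hv0 i => ?_⟩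
  · simpa using finrank_span_eq_card hw.linearIndependent
  obtain ⟨a, rfl⟩ := (Submodule.mem_span_range_iff_exists_fun ℝ).1 hv
  have a_pos : 0 < ‖a‖ := norm_pos_iff.2 fun h => hv0 (by simp [h])
  have norm_unit : ‖‖a‖⁻¹ • a‖ = 1 := norm_smul_inv_norm (norm_pos_iff.1 a_pos)
  have normal_eq : ∑ j, (‖a‖⁻¹ • a) j • w j = ‖a‖⁻¹ • ∑ j, a j • w j := by
    simp [smul_sum, smul_smul]
  have inner_eq : a ⬝ᵥ t = ⟪∑ j, t j • w j, ∑ j, a j • w j⟫ := by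
    simp [hw.inner_sum, dotProduct, mul_comm]
  have level_eq : ENNReal.ofReal (1 / (m + 1)) = 1 / ((m + 1 : ℕ) : ENNReal) := by
    rw [ENNReal.ofReal_div_of_pos (by positivity), ENNReal.ofReal_one, ← Nat.cast_succ,
      ENNReal.ofReal_natCast]
  have le_mass := ofReal_le_measure_of_eventually_isApproxCenter (ht i) norm_unit
  simpa only [level_eq, normal_eq, inner_smul_right, smul_dotProduct, inner_eq, smul_eq_mul,
    mul_le_mul_iff_right₀ (inv_pos.2 a_pos)] using le_mass

end Transversal

end CentralTransversal

theorem central_transversal_general {E : Type*} [NormedAddCommGroup E] [InnerProductSpace ℝ E]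
    [MeasurableSpace E] [BorelSpace E] {k d : ℕ} (hd : Module.finrank ℝ E = d) (hkd : k < d)
    (μ : Fin (k + 1) → Measure E) [∀ i, IsProbabilityMeasure (μ i)] :
    ∃ V : AffineSubspace ℝ E, (V : Set E).Nonempty ∧ Module.finrank ℝ V.direction = k ∧
      ∀ (v : E) (α : ℝ), v ≠ 0 → (V : Set E) ⊆ {x | ⟪x, v⟫ ≤ α} →
        ∀ i, 1 / ((d - k + 1 : ℕ) : ENNReal) ≤ μ i {x | ⟪x, v⟫ ≤ α} := by
  obtain ⟨m, rfl⟩ := Nat.exists_eq_add_of_lt hkd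
  have : FiniteDimensional ℝ E := FiniteDimensional.of_finrank_pos (by lia)
  obtain ⟨S, p, finrank_S, measure_ge⟩ :=
    CentralTransversal.exists_submodule_forall_le_measure_halfspace (m := m + 1) μ
      ((stdOrthonormalBasis ℝ E).reindex (finCongr hd))
  refine ⟨AffineSubspace.mk' p Sᗮ, AffineSubspace.mk'_nonempty p Sᗮ, ?_, fun v α hv hV i => ?_⟩
  · have := S.finrank_add_finrank_orthogonal
    rw [AffineSubspace.direction_mk']
    lia
  obtain ⟨hvS, hpv⟩ := CentralTransversal.mem_and_inner_le_of_mk'_orthogonal_subset hV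
  rw [Nat.add_assoc, Nat.add_sub_cancel_left]
  exact (measure_ge v hvS hv i).trans (measure_mono fun x hx => le_trans hx hpv)

/-- The central transversal theorem. -/
theorem central_transversal (k d : ℕ) (hkd : k < d)
    (μ : Fin (k + 1) → Measure (EuclideanSpace ℝ (Fin d)))
    (hprob : ∀ i, IsProbabilityMeasure (μ i))
    (hac : ∀ i, μ i ≪ volume) :
    ∃ V : AffineSubspace ℝ (EuclideanSpace ℝ (Fin d)),
      (V : Set (EuclideanSpace ℝ (Fin d))).Nonempty ∧
      Module.finrank ℝ V.direction = k ∧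
      ∀ (v : EuclideanSpace ℝ (Fin d)) (α : ℝ), v ≠ 0 →
        (V : Set (EuclideanSpace ℝ (Fin d))) ⊆ {x | ⟪x, v⟫ ≤ α} →
        ∀ i, 1 / ((d - k + 1 : ℕ) : ENNReal) ≤ μ i {x | ⟪x, v⟫ ≤ α} :=
  central_transversal_general finrank_euclideanSpace_fin hkd μ
end

section
/- Let A be a finite family of lines in ℝ², no two of which are parallel, and let (C₁, C₂) be a convex partition of the plane into two parts. Define, for a set K ⊆ ℝ², μ_A(K) to be the maximum cardinality of a subset X ⊆ A such that the intersection point of every pair of distinct lines of X lies in K. Then μ_A(C₁) · μ_A(C₂) ≥ |A|. -/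
/-!
The interiors of `C₁` and `C₂` are separated by a hyperplane, so there are a linear form `f` and a
real `u` with `{f ≤ u} ⊆ C₁` and `{u ≤ f} ⊆ C₂`, and it suffices to treat these two half-spaces.

A line on which `f` is constant lies in one of the half-spaces, hence can be added to the
corresponding subfamily at will. Every other line is `{z | z = (f z - u) • v + p}` for a direction
`v` and its point `p` on `{f = u}`. Choose a linear form `g` injective on the finitely many
directions, and call `g v` the slope and `g p` the intercept of the line. Two lines with slopes
`m < m'` that meet do so in `{f ≤ u}` if their intercepts satisfy `b ≤ b'`, and in `{u ≤ f}` if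
`b' ≤ b`. So for the product order on pairs (slope, intercept), chains meet in `{f ≤ u}` and
antichains in `{u ≤ f}`, and Mirsky's theorem gives a chain and an antichain of the required sizes.
-/

open Finset

section PairwiseProductBound

variable {α : Type*} {r r' s s' : α → α → Prop} {A B : Finset α} {a : α}

/-- The Erdős–Szekeres type conclusion for two relations `r` and `s`: the product of the sizes of
some pairwise `r`-related and some pairwise `s`-related subset of `A` is at least `#A`. -/
def PairwiseProductBound (r s : α → α → Prop) (A : Finset α) : Prop :=
  ∃ X ⊆ A, ∃ Y ⊆ A, (X : Set α).Pairwise r ∧ (Y : Set α).Pairwise s ∧ #A ≤ #X * #Y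

namespace PairwiseProductBound

theorem swap (h : PairwiseProductBound r s A) : PairwiseProductBound s r A := by
  obtain ⟨X, hXA, Y, hYA, hX, hY, hcard⟩ := h
  exact ⟨Y, hYA, X, hXA, hY, hX, by rwa [mul_comm]⟩

theorem mono (h : PairwiseProductBound r s A)
    (hr : ∀ a ∈ A, ∀ b ∈ A, a ≠ b → r a b → r' a b)
    (hs : ∀ a ∈ A, ∀ b ∈ A, a ≠ b → s a b → s' a b) : PairwiseProductBound r' s' A := by
  obtain ⟨X, hXA, Y, hYA, hX, hY, hcard⟩ := h
  exact ⟨X, hXA, Y, hYA,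
    fun a ha b hb hab => hr a (hXA ha) b (hXA hb) hab (hX ha hb hab),
    fun a ha b hb hab => hs a (hYA ha) b (hYA hb) hab (hY ha hb hab), hcard⟩

variable [DecidableEq α]

theorem insert_of_forall_left (h : PairwiseProductBound r s A) (ha : a ∉ A)
    (hr : ∀ b ∈ A, r a b ∧ r b a) : PairwiseProductBound r s (insert a A) := by
  obtain ⟨X, hXA, Y, hYA, hX, hY, hcard⟩ := h
  rcases Y.eq_empty_or_nonempty with rfl | hY_nonempty
  · obtain rfl : A = ∅ := by simpa using hcard
    exact ⟨{a}, by simp, {a}, by simp, by simp, by simp, by simp⟩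
  · refine ⟨insert a X, insert_subset_insert a hXA, Y, hYA.trans (subset_insert a A), ?_, hY, ?_⟩
    · rw [coe_insert]
      exact hX.insert fun b hb _ => hr b (hXA hb)
    · calc #(insert a A) = #A + 1 := card_insert_of_notMem ha
        _ ≤ #X * #Y + #Y := Nat.add_le_add hcard hY_nonempty.card_pos
        _ = #(insert a X) * #Y := by rw [card_insert_of_notMem (mt (@hXA a) ha), add_one_mul]

theorem of_subset (h : PairwiseProductBound r s B) (hBA : B ⊆ A)
    (hA : ∀ a ∈ A \ B, (∀ b ∈ A, a ≠ b → r a b ∧ r b a) ∨ (∀ b ∈ A, a ≠ b → s a b ∧ s b a)) :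
    PairwiseProductBound r s A := by
  suffices PairwiseProductBound r s (A \ B ∪ B) by rwa [sdiff_union_of_subset hBA] at this
  refine Finset.induction_on' (A \ B) (by rwa [empty_union]) fun {a C} ha hC haC ih => ?_
  have ha_notMem : a ∉ C ∪ B := by simp [haC, (mem_sdiff.1 ha).2]
  have hCA : C ∪ B ⊆ A := union_subset (hC.trans sdiff_subset) hBA
  have ha_ne : ∀ b ∈ C ∪ B, a ≠ b := fun b hb hab => ha_notMem (hab ▸ hb)
  rw [insert_union]
  rcases hA a ha with hr | hs
  · exact ih.insert_of_forall_left ha_notMem fun b hb => hr b (hCA hb) (ha_ne b hb)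
  · exact (ih.swap.insert_of_forall_left ha_notMem fun b hb => hs b (hCA hb) (ha_ne b hb)).swap

end PairwiseProductBound

end PairwiseProductBound

section Mirsky

variable {α : Type*} [Preorder α]

theorem height_lt_top_of_finite [Finite α] (a : α) : Order.height a < ⊤ := by
  have := Fintype.ofFinite α
  refine lt_of_le_of_lt (Order.height_le fun p _ => ?_) (ENat.natCast_lt_top (Fintype.card α))
  exact_mod_cast p.length_lt_card.le

theorem exists_isChain_card_eq_height_add_one [Finite α] (a : α) :
    ∃ X : Finset α, IsChain (· < ·) (X : Set α) ∧ (#X : ℕ∞) = Order.height a + 1 := by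
  classical
  obtain ⟨n, hn⟩ := ENat.ne_top_iff_exists.1 (height_lt_top_of_finite a).ne
  obtain ⟨p, -, rfl⟩ := Order.exists_series_of_height_eq_coe a hn.symm
  refine ⟨univ.image p, ?_, ?_⟩
  · rw [coe_image, coe_univ]
    rintro _ ⟨i, -, rfl⟩ _ ⟨j, -, rfl⟩ hij
    exact (ne_of_apply_ne p hij).lt_or_gt.imp (fun h => p.strictMono h) (fun h => p.strictMono h)
  · simp [card_image_of_injective _ p.strictMono.injective, ← hn]

theorem isAntichain_setOf_height_eq [Finite α] (n : ℕ∞) :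
    IsAntichain (· < ·) {a : α | Order.height a = n} := by
  rintro a rfl b hb - hab
  exact (Order.height_strictMono hab (height_lt_top_of_finite a)).ne' hb

theorem pairwiseProductBound_lt_univ [Fintype α] :
    PairwiseProductBound (fun a b : α => a < b ∨ b < a) (IncompRel (· < ·)) univ := by
  classical
  cases isEmpty_or_nonempty α
  · exact ⟨∅, by simp, ∅, by simp, by simp, by simp, by simp⟩
  obtain ⟨top, htop⟩ := Finite.exists_max (Order.height (α := α))
  obtain ⟨X, hX, hX_card⟩ := exists_isChain_card_eq_height_add_one top
  let level (n : ℕ∞) : Finset α := {b | Order.height b = n}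
  obtain ⟨widest, hwidest⟩ := Finite.exists_max fun a : α => #(level (Order.height a))
  have hheights : univ.image (Order.height (α := α)) ⊆ (range #X).image (Nat.cast : ℕ → ℕ∞) := by
    intro h hh
    obtain ⟨a, -, rfl⟩ := mem_image.1 hh
    obtain ⟨k, hk⟩ := ENat.ne_top_iff_exists.1 (height_lt_top_of_finite a).ne
    refine mem_image.2 ⟨k, mem_range.2 ?_, hk⟩
    rw [← Nat.cast_lt (α := ℕ∞), hX_card, hk]
    exact ENat.lt_add_one_iff (height_lt_top_of_finite top).ne |>.2 (htop a)
  refine ⟨X, subset_univ X, level (Order.height widest), subset_univ _, hX, ?_, ?_⟩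
  · intro a ha b hb hab
    have hlevel := isAntichain_setOf_height_eq (α := α) (Order.height widest)
    rw [mem_coe, mem_filter_univ] at ha hb
    exact ⟨hlevel ha hb hab, hlevel hb ha hab.symm⟩
  · calc #(univ : Finset α)
        ≤ #(level (Order.height widest)) * #(univ.image (Order.height (α := α))) :=
          card_le_mul_card_image _ _ fun h hh => by
            obtain ⟨a, -, rfl⟩ := mem_image.1 hh
            exact hwidest a
      _ ≤ #(level (Order.height widest)) * #X := by
          gcongr
          simpa using (card_le_card hheights).trans card_image_le
      _ = #X * #(level (Order.height widest)) := mul_comm _ _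

theorem pairwiseProductBound_lt {ι : Type*} (key : ι → α) (A : Finset ι) :
    PairwiseProductBound (fun i j => key i < key j ∨ key j < key i)
      (fun i j => IncompRel (· < ·) (key i) (key j)) A := by
  let : Preorder A := Preorder.lift fun i => key i
  obtain ⟨X, -, Y, -, hX, hY, hcard⟩ := pairwiseProductBound_lt_univ (α := A)
  refine ⟨X.map (.subtype _), map_subtype_subset X, Y.map (.subtype _), map_subtype_subset Y,
    ?_, ?_, by simpa using hcard⟩
  · rw [coe_map, Set.InjOn.pairwise_image (Function.Embedding.subtype _).injective.injOn]
    exact hX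
  · rw [coe_map, Set.InjOn.pairwise_image (Function.Embedding.subtype _).injective.injOn]
    exact hY

end Mirsky

section Halfspaces

variable {𝕜 E : Type*} [Field 𝕜] [AddCommGroup E] [Module 𝕜 E]
  {f : Module.Dual 𝕜 E} {u : 𝕜} {ℓ ℓ' : AffineSubspace 𝕜 E} {K K' : Set E}

/-- The common points of `ℓ` and `ℓ'` all lie in `K`. This is the relation required of each pair of
distinct lines in a subfamily counted by `μ_A(K)`; it holds vacuously for disjoint lines. -/
def MeetWithin (K : Set E) (ℓ ℓ' : AffineSubspace 𝕜 E) : Prop :=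
  (ℓ : Set E) ∩ ℓ' ⊆ K

theorem MeetWithin.mono (h : MeetWithin K ℓ ℓ') (hK : K ⊆ K') : MeetWithin K' ℓ ℓ' :=
  h.trans hK

theorem meetWithin_and_meetWithin_of_subset (h : (ℓ : Set E) ⊆ K) :
    MeetWithin K ℓ ℓ' ∧ MeetWithin K ℓ' ℓ :=
  ⟨Set.inter_subset_left.trans h, Set.inter_subset_right.trans h⟩

theorem exists_mem_iff_eq_smul_add (u : 𝕜) (hℓ : Module.finrank 𝕜 ℓ.direction = 1)
    (hf : ∃ w ∈ ℓ.direction, f w ≠ 0) :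
    ∃ v p : E, ∀ z, z ∈ ℓ ↔ z = (f z - u) • v + p := by
  obtain ⟨w, hw, hfw⟩ := hf
  obtain ⟨z₀, hz₀⟩ : (ℓ : Set E).Nonempty := by
    rw [AffineSubspace.nonempty_iff_ne_bot]
    rintro rfl
    rw [AffineSubspace.direction_bot, finrank_bot] at hℓ
    exact zero_ne_one hℓ
  have hw_ne : (⟨w, hw⟩ : ℓ.direction) ≠ 0 := by
    rw [Ne, Submodule.mk_eq_zero]
    rintro rfl
    exact hfw (map_zero f)
  have hspan := (finrank_eq_one_iff_of_nonzero' _ hw_ne).1 hℓ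
  refine ⟨(f w)⁻¹ • w, z₀ - (f z₀ - u) • (f w)⁻¹ • w, fun z => ⟨fun hz => ?_, fun hz => ?_⟩⟩
  · obtain ⟨c, hc⟩ := hspan ⟨z -ᵥ z₀, AffineSubspace.vsub_mem_direction hz hz₀⟩
    obtain rfl : z = z₀ + c • w := by
      rw [← sub_eq_iff_eq_add']
      exact (congrArg Subtype.val hc).symm
    simp only [map_add, map_smul, smul_eq_mul]
    match_scalars
    · ring
    · field_simp
      ring
  · have hz_vadd : z = ((f z - f z₀) * (f w)⁻¹) • w +ᵥ z₀ := by
      rw [vadd_eq_add]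
      nth_rw 1 [hz]
      module
    rw [hz_vadd]
    exact AffineSubspace.vadd_mem_of_mem_direction (ℓ.direction.smul_mem _ hw) hz₀

variable [LinearOrder 𝕜]

theorem subset_halfspace_or_subset_halfspace (u : 𝕜) (hf : ∀ w ∈ ℓ.direction, f w = 0) :
    (ℓ : Set E) ⊆ {z | f z ≤ u} ∨ (ℓ : Set E) ⊆ {z | u ≤ f z} := by
  by_contra! h
  obtain ⟨⟨x, hx, hxu⟩, ⟨y, hy, hyu⟩⟩ := h.imp Set.not_subset.1 Set.not_subset.1
  have hxy := hf _ (AffineSubspace.vsub_mem_direction hx hy)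
  rw [vsub_eq_sub, map_sub, sub_eq_zero] at hxy
  exact hyu ((not_le.1 hxu).le.trans_eq hxy)

variable [IsStrictOrderedRing 𝕜]

theorem exists_slope_intercept (u : 𝕜) {A : Finset (AffineSubspace 𝕜 E)}
    (hline : ∀ ℓ ∈ A, Module.finrank 𝕜 ℓ.direction = 1)
    (hf : ∀ ℓ ∈ A, ∃ w ∈ ℓ.direction, f w ≠ 0) :
    ∃ m b : AffineSubspace 𝕜 E → 𝕜, ∀ ℓ ∈ A, ∀ ℓ' ∈ A, ℓ ≠ ℓ' → ∀ z ∈ ℓ, z ∈ ℓ' →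
      m ℓ ≠ m ℓ' ∧ (f z - u) * m ℓ + b ℓ = (f z - u) * m ℓ' + b ℓ' := by
  choose! v p hvp using fun ℓ hℓ => exists_mem_iff_eq_smul_add u (hline ℓ hℓ) (hf ℓ hℓ)
  obtain ⟨g, hg⟩ := Module.exists_dual_forall_apply_ne_zero (K := 𝕜)
    (fun i : {i : A × A // v i.1 - v i.2 ≠ 0} => v i.1.1 - v i.1.2) fun i => i.2
  refine ⟨g ∘ v, g ∘ p, fun ℓ hℓ ℓ' hℓ' hne z hz hz' => ?_⟩
  have hz_eq : z = (f z - u) • v ℓ + p ℓ := (hvp ℓ hℓ z).1 hz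
  have hz_eq' : z = (f z - u) • v ℓ' + p ℓ' := (hvp ℓ' hℓ' z).1 hz'
  have hv : v ℓ ≠ v ℓ' := by
    intro hv
    have hp : p ℓ = p ℓ' := by
      rw [hv] at hz_eq
      exact add_left_cancel (hz_eq.symm.trans hz_eq')
    exact hne (SetLike.ext fun y => by rw [hvp ℓ hℓ, hvp ℓ' hℓ', hv, hp])
  refine ⟨fun hgv => hg ⟨(⟨ℓ, hℓ⟩, ⟨ℓ', hℓ'⟩), sub_ne_zero.2 hv⟩ ?_, ?_⟩
  · simpa [sub_eq_zero] using hgv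
  · simpa using congrArg g (hz_eq.symm.trans hz_eq')

theorem nonpos_of_mul_add_eq_mul_add {t m m' b b' : 𝕜} (h : t * m + b = t * m' + b')
    (hm : m < m') (hb : b ≤ b') : t ≤ 0 := by
  have hprod : t * (m' - m) ≤ 0 := by linarith
  exact nonpos_of_mul_nonpos_left hprod (sub_pos.2 hm)

theorem nonneg_of_mul_add_eq_mul_add {t m m' b b' : 𝕜} (h : t * m + b = t * m' + b')
    (hm : m < m') (hb : b' ≤ b) : 0 ≤ t := by
  have hprod : 0 ≤ t * (m' - m) := by linarith
  exact nonneg_of_mul_nonneg_left hprod (sub_pos.2 hm)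

variable {t : 𝕜} {k k' : 𝕜 × 𝕜}

theorem nonpos_of_lt_or_gt (h : t * k.1 + k.2 = t * k'.1 + k'.2)
    (hne : k.1 ≠ k'.1) (hlt : k < k' ∨ k' < k) : t ≤ 0 := by
  rcases hlt with hlt | hlt
  · exact nonpos_of_mul_add_eq_mul_add h (hlt.le.1.lt_of_ne hne) hlt.le.2
  · exact nonpos_of_mul_add_eq_mul_add h.symm (hlt.le.1.lt_of_ne hne.symm) hlt.le.2

theorem nonneg_of_incompRel_lt (h : t * k.1 + k.2 = t * k'.1 + k'.2)
    (hne : k.1 ≠ k'.1) (hinc : IncompRel (· < ·) k k') : 0 ≤ t := by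
  rcases hne.lt_or_gt with hlt | hlt
  · have hb : k'.2 < k.2 := not_le.1 fun hb => hinc.1 (Prod.lt_of_lt_of_le hlt hb)
    exact nonneg_of_mul_add_eq_mul_add h hlt hb.le
  · have hb : k.2 < k'.2 := not_le.1 fun hb => hinc.2 (Prod.lt_of_lt_of_le hlt hb)
    exact nonneg_of_mul_add_eq_mul_add h.symm hlt hb.le

variable {A : Finset (AffineSubspace 𝕜 E)}

theorem pairwiseProductBound_halfspaces_of_exists_ne_zero (u : 𝕜)
    (hline : ∀ ℓ ∈ A, Module.finrank 𝕜 ℓ.direction = 1)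
    (hf : ∀ ℓ ∈ A, ∃ w ∈ ℓ.direction, f w ≠ 0) :
    PairwiseProductBound (MeetWithin {z | f z ≤ u}) (MeetWithin {z | u ≤ f z}) A := by
  obtain ⟨m, b, hmb⟩ := exists_slope_intercept u hline hf
  refine (pairwiseProductBound_lt (fun ℓ => (m ℓ, b ℓ)) A).mono
    (fun ℓ hℓ ℓ' hℓ' hne hcomp z hz => ?_) (fun ℓ hℓ ℓ' hℓ' hne hinc z hz => ?_)
  all_goals obtain ⟨hm, heq⟩ := hmb ℓ hℓ ℓ' hℓ' hne z hz.1 hz.2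
  · exact sub_nonpos.1 (nonpos_of_lt_or_gt heq hm hcomp)
  · exact sub_nonneg.1 (nonneg_of_incompRel_lt heq hm hinc)

theorem pairwiseProductBound_halfspaces (f : Module.Dual 𝕜 E) (u : 𝕜)
    (hline : ∀ ℓ ∈ A, Module.finrank 𝕜 ℓ.direction = 1) :
    PairwiseProductBound (MeetWithin {z | f z ≤ u}) (MeetWithin {z | u ≤ f z}) A := by
  classical
  let B := {ℓ ∈ A | ∃ w ∈ ℓ.direction, f w ≠ 0}
  have hB : PairwiseProductBound (MeetWithin {z | f z ≤ u}) (MeetWithin {z | u ≤ f z}) B :=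
    pairwiseProductBound_halfspaces_of_exists_ne_zero u
      (fun ℓ hℓ => hline ℓ (mem_of_mem_filter ℓ hℓ)) fun ℓ hℓ => (mem_filter.1 hℓ).2
  refine hB.of_subset (filter_subset _ A) fun ℓ hℓ => ?_
  have hconst : ∀ w ∈ ℓ.direction, f w = 0 := by
    obtain ⟨hℓA, hℓB⟩ := mem_sdiff.1 hℓ
    by_contra! hne
    exact hℓB (mem_filter.2 ⟨hℓA, hne⟩)
  exact (subset_halfspace_or_subset_halfspace u hconst).imp
    (fun h _ _ _ => meetWithin_and_meetWithin_of_subset h)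
    (fun h _ _ _ => meetWithin_and_meetWithin_of_subset h)

end Halfspaces

section ConvexPartition

variable {E : Type*} [TopologicalSpace E] [AddCommGroup E] [IsTopologicalAddGroup E]
  [Module ℝ E] [ContinuousSMul ℝ E] {C₁ C₂ : Set E}

theorem exists_halfspace_subset_and_halfspace_subset
    (hcl : IsClosed C₁ ∧ IsClosed C₂) (hconv : Convex ℝ C₁ ∧ Convex ℝ C₂)
    (hcover : C₁ ∪ C₂ = Set.univ) (hdisj : Disjoint (interior C₁) (interior C₂)) :
    ∃ (f : StrongDual ℝ E) (u : ℝ), {z | f z ≤ u} ⊆ C₁ ∧ {z | u ≤ f z} ⊆ C₂ := by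
  obtain ⟨f, u, hf₁, hf₂⟩ := geometric_hahn_banach_open_open hconv.1.interior isOpen_interior
    hconv.2.interior isOpen_interior hdisj
  have hcompl₁ : C₁ᶜ ⊆ interior C₂ :=
    interior_maximal (Set.compl_subset_iff_union.2 hcover) hcl.1.isOpen_compl
  have hcompl₂ : C₂ᶜ ⊆ interior C₁ :=
    interior_maximal (Set.compl_subset_iff_union.2 (Set.union_comm C₁ C₂ ▸ hcover))
      hcl.2.isOpen_compl
  refine ⟨f, u, fun z hz => ?_, fun z hz => ?_⟩
  · by_contra hzC
    exact (hf₂ z (hcompl₁ hzC)).not_ge hz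
  · by_contra hzC
    exact (hf₁ z (hcompl₂ hzC)).not_ge hz

theorem lines_product_lemma_general {A : Finset (AffineSubspace ℝ E)}
    (hline : ∀ ℓ ∈ A, Module.finrank ℝ ℓ.direction = 1)
    (hcl : IsClosed C₁ ∧ IsClosed C₂) (hconv : Convex ℝ C₁ ∧ Convex ℝ C₂)
    (hcover : C₁ ∪ C₂ = Set.univ) (hdisj : Disjoint (interior C₁) (interior C₂)) :
    PairwiseProductBound (MeetWithin C₁) (MeetWithin C₂) A := by
  obtain ⟨f, u, hC₁, hC₂⟩ :=
    exists_halfspace_subset_and_halfspace_subset hcl hconv hcover hdisj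
  exact (pairwiseProductBound_halfspaces f.toLinearMap u hline).mono
    (fun _ _ _ _ _ h => h.mono hC₁) (fun _ _ _ _ _ h => h.mono hC₂)

end ConvexPartition

/-- Dujmović–Langerman's lemma (via Erdős–Szekeres): for a convex partition
`(C₁, C₂)` of the plane and a family `A` of pairwise non-parallel lines,
`μ_A(C₁) · μ_A(C₂) ≥ |A|`. -/
theorem lines_product_lemma
    (A : Finset (AffineSubspace ℝ (EuclideanSpace ℝ (Fin 2))))
    (hline : ∀ ℓ ∈ A, (ℓ : Set (EuclideanSpace ℝ (Fin 2))).Nonempty ∧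
      Module.finrank ℝ ℓ.direction = 1)
    (hpar : ∀ ℓ ∈ A, ∀ ℓ' ∈ A, ℓ ≠ ℓ' → ℓ.direction ≠ ℓ'.direction)
    (C₁ C₂ : Set (EuclideanSpace ℝ (Fin 2)))
    (hcl : IsClosed C₁ ∧ IsClosed C₂) (hconv : Convex ℝ C₁ ∧ Convex ℝ C₂)
    (hcover : C₁ ∪ C₂ = Set.univ)
    (hdisj : Disjoint (interior C₁) (interior C₂)) :
    ∃ X₁ X₂ : Finset (AffineSubspace ℝ (EuclideanSpace ℝ (Fin 2))),
      X₁ ⊆ A ∧ X₂ ⊆ A ∧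
      (∀ ℓ ∈ X₁, ∀ ℓ' ∈ X₁, ℓ ≠ ℓ' →
        (ℓ : Set (EuclideanSpace ℝ (Fin 2))) ∩ ℓ' ⊆ C₁) ∧
      (∀ ℓ ∈ X₂, ∀ ℓ' ∈ X₂, ℓ ≠ ℓ' →
        (ℓ : Set (EuclideanSpace ℝ (Fin 2))) ∩ ℓ' ⊆ C₂) ∧
      A.card ≤ X₁.card * X₂.card := by
  obtain ⟨X₁, hX₁A, X₂, hX₂A, hX₁, hX₂, hcard⟩ :=
    lines_product_lemma_general (fun ℓ hℓ => (hline ℓ hℓ).2) hcl hconv hcover hdisj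
  exact ⟨X₁, X₂, hX₁A, hX₂A, @hX₁, @hX₂, hcard⟩
end

section
/- Let d and r be positive integers and let m = C(d + r, r) − 1, where C(·,·) denotes the binomial coefficient. Let μ₁, …, μ_m be finite measures on ℝ^d, each absolutely continuous with respect to the Lebesgue measure. Then there exists a nonzero real polynomial f in d variables of total degree at most r such that μ_i({x ∈ ℝ^d : f(x) ≥ 0}) = μ_i({x ∈ ℝ^d : f(x) ≤ 0}) for every i = 1, …, m. -/
open MeasureTheory

/-!
The polynomials of degree at most `r` in `d` variables form a space of dimension `m + 1`, where
`m = (d + r).choose r - 1`. Since a nonzero polynomial vanishes only on a null set, the map sending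
`f` to the vector of differences `μ i {0 ≤ f} - μ i {f ≤ 0}` is continuous away from `0`; it is
odd, so the Borsuk–Ulam theorem provides a nonzero `f` at which it vanishes.

Borsuk–Ulam is proved with mod 2 chains. Suppose that an odd map `g` into `ℝⁿ` has no zero on the
surface of a cross-polytope, and let `sᵢ` be the sign of the `i`-th coordinate of `g`. The cocycle
`δs₁ ⌣ ⋯ ⌣ δsₙ` has value `1` on an `n`-dimensional hemisphere, by induction on `n`: the boundary of
the hemisphere consists of two antipodal hemispheres of lower dimension, and `s₁` is `1` at exactly
one of any two antipodal points. After sufficiently many barycentric subdivisions, however, some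
coordinate of `g` has constant sign on each simplex, so that the cocycle vanishes.
-/

/-- Mod 2 chains of ordered simplices: formal sums of vertex lists, repetitions allowed. The complex
is augmented, the empty list being the simplex of dimension `-1`. -/
abbrev OrderedChain (V : Type*) := List V →₀ ZMod 2

namespace OrderedChain

section Operators

variable {V W M : Type*} [AddCommGroup M] [Module (ZMod 2) M]

/-- The chain consisting of a single ordered simplex. -/
noncomputable abbrev simplex (l : List V) : OrderedChain V := Finsupp.single l 1

lemma hom_ext {f g : OrderedChain V →ₗ[ZMod 2] M} (h : ∀ l, f (simplex l) = g (simplex l)) :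
    f = g :=
  Finsupp.basisSingleOne.ext fun l => by simpa using h l

/-- The chains all of whose simplices belong to `P`. -/
abbrev chainsOn (P : Set (List V)) : Submodule (ZMod 2) (OrderedChain V) :=
  Finsupp.supported (ZMod 2) (ZMod 2) P

lemma map_mem_of_mem_chainsOn {P : Set (List V)} {N : Submodule (ZMod 2) M}
    {f : OrderedChain V →ₗ[ZMod 2] M} (h : ∀ l ∈ P, f (simplex l) ∈ N) {c : OrderedChain V}
    (hc : c ∈ chainsOn P) : f c ∈ N := by
  rw [chainsOn, Finsupp.supported_eq_span_single] at hc
  exact (Submodule.span_le (p := N.comap f)).2 (Set.image_subset_iff.2 h) hc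

lemma eq_of_mem_chainsOn {P : Set (List V)} {f g : OrderedChain V →ₗ[ZMod 2] M}
    (h : ∀ l ∈ P, f (simplex l) = g (simplex l)) {c : OrderedChain V}
    (hc : c ∈ chainsOn P) : f c = g c :=
  map_mem_of_mem_chainsOn (f := LinearMap.id) (N := LinearMap.eqLocus f g) h hc

/-- The join of a chain with the new first vertex `v`. -/
noncomputable def cone (v : V) : OrderedChain V →ₗ[ZMod 2] OrderedChain V :=
  Finsupp.lmapDomain (ZMod 2) (ZMod 2) (List.cons v)

@[simp]
lemma cone_simplex (v : V) (l : List V) : cone v (simplex l) = simplex (v :: l) := by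
  simp [cone]

/-- The chain map induced by a map of vertices. -/
noncomputable def map (f : V → W) : OrderedChain V →ₗ[ZMod 2] OrderedChain W :=
  Finsupp.lmapDomain (ZMod 2) (ZMod 2) (List.map f)

@[simp]
lemma map_simplex (f : V → W) (l : List V) : map f (simplex l) = simplex (l.map f) := by
  simp [map]

lemma map_cone (f : V → W) (v : V) (c : OrderedChain V) :
    map f (cone v c) = cone (f v) (map f c) := by
  have h : map f ∘ₗ cone v = cone (f v) ∘ₗ map f := hom_ext fun l => by simp
  exact LinearMap.congr_fun h c

/-- The simplicial boundary, the sum of the faces obtained by omitting one vertex. -/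
noncomputable def boundary : OrderedChain V →ₗ[ZMod 2] OrderedChain V :=
  Finsupp.linearCombination (ZMod 2) fun l => ∑ i : Fin l.length, simplex (l.eraseIdx i)

lemma boundary_simplex (l : List V) :
    boundary (simplex l) = ∑ i : Fin l.length, simplex (l.eraseIdx i) := by
  simp [boundary]

@[simp]
lemma boundary_simplex_nil : boundary (simplex ([] : List V)) = 0 := by
  simp [boundary_simplex]

lemma boundary_cone (v : V) (c : OrderedChain V) :
    boundary (cone v c) = c + cone v (boundary c) := by
  have h : boundary ∘ₗ cone v = LinearMap.id + cone v ∘ₗ boundary := hom_ext fun l => by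
    simp [boundary_simplex, Fin.sum_univ_succ]
  exact LinearMap.congr_fun h c

lemma boundary_simplex_cons (v : V) (l : List V) :
    boundary (simplex (v :: l)) = simplex l + cone v (boundary (simplex l)) := by
  rw [← cone_simplex, boundary_cone]

lemma boundary_boundary (c : OrderedChain V) : boundary (boundary c) = 0 := by
  have h : boundary ∘ₗ boundary = (0 : OrderedChain V →ₗ[ZMod 2] OrderedChain V) :=
    hom_ext fun l => by
      induction l with
      | nil => simp
      | cons v l ih =>
        simp only [LinearMap.comp_apply, LinearMap.zero_apply] at ih ⊢
        rw [boundary_simplex_cons, map_add, boundary_cone, ih, map_zero, add_zero,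
          ZModModule.add_self]
  exact LinearMap.congr_fun h c

lemma boundary_map (f : V → W) (c : OrderedChain V) :
    boundary (map f c) = map f (boundary c) := by
  have h : boundary ∘ₗ map f = map f ∘ₗ boundary := hom_ext fun l => by
    induction l with
    | nil => simp
    | cons v l ih =>
      simp only [LinearMap.comp_apply, map_simplex, List.map_cons] at ih ⊢
      rw [boundary_simplex_cons, boundary_simplex_cons, map_add, map_cone, ih, map_simplex]
  exact LinearMap.congr_fun h c

lemma boundary_simplex_mem_chainsOn (l : List V) :
    boundary (simplex l) ∈ chainsOn {l' | l'.Sublist l ∧ l'.length < l.length} := by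
  rw [boundary_simplex]
  refine sum_mem fun i _ => Finsupp.single_mem_supported _ _ ⟨List.eraseIdx_sublist _ _, ?_⟩
  rw [List.length_eraseIdx_of_lt i.2]
  have := i.2
  omega

lemma hom_ext_of_boundary {f g : OrderedChain V →ₗ[ZMod 2] M}
    (h : ∀ l, f (boundary (simplex l)) = g (boundary (simplex l)) →
      f (simplex l) = g (simplex l)) : f = g := by
  refine hom_ext fun l => ?_
  induction hn : l.length using Nat.strong_induction_on generalizing l with
  | _ n ih =>
    subst hn
    exact h l <| eq_of_mem_chainsOn (fun l' hl' => ih _ hl'.2 l' rfl)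
      (boundary_simplex_mem_chainsOn l)

/-- The chains all of whose vertices lie in `A`. -/
def chainsIn (A : Set V) : Submodule (ZMod 2) (OrderedChain V) :=
  chainsOn {l | ∀ v ∈ l, v ∈ A}

lemma simplex_mem_chainsIn {A : Set V} {l : List V} (hl : ∀ v ∈ l, v ∈ A) :
    simplex l ∈ chainsIn A :=
  Finsupp.single_mem_supported _ _ hl

lemma boundary_mem_chainsIn {A : Set V} {c : OrderedChain V} (hc : c ∈ chainsIn A) :
    boundary c ∈ chainsIn A := by
  refine map_mem_of_mem_chainsOn (fun l hl => ?_) hc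
  refine Finsupp.supported_mono ?_ (boundary_simplex_mem_chainsOn l)
  exact fun _ hl' v hv => hl v (hl'.1.subset hv)

end Operators

section Cochains

variable {V : Type*}

/-- The cup product `s ⌣ φ` of a function `s` on vertices with a cochain `φ`. -/
noncomputable def cup (s : V → ZMod 2) (φ : OrderedChain V →ₗ[ZMod 2] ZMod 2) :
    OrderedChain V →ₗ[ZMod 2] ZMod 2 :=
  Finsupp.linearCombination (ZMod 2) fun l => l.head?.elim 0 s * φ (simplex l)

lemma cup_simplex_nil (s : V → ZMod 2) (φ : OrderedChain V →ₗ[ZMod 2] ZMod 2) :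
    cup s φ (simplex []) = 0 := by
  simp [cup]

lemma cup_simplex_cons (s : V → ZMod 2) (φ : OrderedChain V →ₗ[ZMod 2] ZMod 2) (v : V)
    (l : List V) : cup s φ (simplex (v :: l)) = s v * φ (simplex (v :: l)) := by
  simp [cup]

lemma cup_eq_mul_of_eqOn_const {s : V → ZMod 2} {φ : OrderedChain V →ₗ[ZMod 2] ZMod 2}
    (hφ : φ (simplex []) = 0) {A : Set V} {a : ZMod 2} (hs : ∀ v ∈ A, s v = a)
    {c : OrderedChain V} (hc : c ∈ chainsIn A) : cup s φ c = a * φ c := by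
  refine eq_of_mem_chainsOn (f := cup s φ) (g := a • φ) (fun l hl => ?_) hc
  cases l with
  | nil => simp [cup_simplex_nil, hφ]
  | cons v l => rw [cup_simplex_cons, hs v (hl v List.mem_cons_self)]; simp

/-- For `ss = [s₁, …, sₖ]`, the `k`-cocycle `δs₁ ⌣ ⋯ ⌣ δsₖ`. It is built as
`δ(s₁ ⌣ (δs₂ ⌣ ⋯ ⌣ δsₖ))`, starting from the coboundary of the augmentation. -/
noncomputable def coboundaryCup : List (V → ZMod 2) → OrderedChain V →ₗ[ZMod 2] ZMod 2
  | [] => Finsupp.lapply [] ∘ₗ boundary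
  | s :: ss => cup s (coboundaryCup ss) ∘ₗ boundary

lemma coboundaryCup_nil (c : OrderedChain V) : coboundaryCup [] c = boundary c [] := rfl

lemma coboundaryCup_cons (s : V → ZMod 2) (ss : List (V → ZMod 2)) (c : OrderedChain V) :
    coboundaryCup (s :: ss) c = cup s (coboundaryCup ss) (boundary c) := rfl

lemma coboundaryCup_simplex_nil (ss : List (V → ZMod 2)) :
    coboundaryCup ss (simplex []) = 0 := by
  cases ss <;> simp [coboundaryCup]

lemma coboundaryCup_boundary (ss : List (V → ZMod 2)) (c : OrderedChain V) :
    coboundaryCup ss (boundary c) = 0 := by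
  cases ss <;> simp [coboundaryCup, boundary_boundary]

lemma coboundaryCup_eq_zero {ss : List (V → ZMod 2)} {A : Set V}
    (hss : ∃ s ∈ ss, ∃ a, ∀ v ∈ A, s v = a) {c : OrderedChain V} (hc : c ∈ chainsIn A) :
    coboundaryCup ss c = 0 := by
  induction ss generalizing c with
  | nil => simp at hss
  | cons s ss ih =>
    rw [coboundaryCup_cons]
    obtain ⟨t, ht, a, ha⟩ := hss
    rcases List.mem_cons.1 ht with rfl | ht
    · rw [cup_eq_mul_of_eqOn_const (coboundaryCup_simplex_nil ss) ha (boundary_mem_chainsIn hc),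
        coboundaryCup_boundary, mul_zero]
    · refine eq_of_mem_chainsOn (g := 0) (fun l hl => ?_) (boundary_mem_chainsIn hc)
      cases l with
      | nil => simp [cup_simplex_nil]
      | cons v l => simp [cup_simplex_cons, ih ⟨t, ht, a, ha⟩ (simplex_mem_chainsIn hl)]

end Cochains

section Antipode

variable {V : Type*} [Neg V]

/-- The chain map induced by the antipodal map `v ↦ -v`. -/
noncomputable def antipode : OrderedChain V →ₗ[ZMod 2] OrderedChain V := map Neg.neg

lemma boundary_antipode (c : OrderedChain V) : boundary (antipode c) = antipode (boundary c) :=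
  boundary_map _ c

lemma antipode_cone (v : V) (c : OrderedChain V) :
    antipode (cone v c) = cone (-v) (antipode c) :=
  map_cone _ v c

lemma antipode_apply_nil (c : OrderedChain V) : antipode c [] = c [] := by
  have h : Finsupp.lapply [] ∘ₗ antipode =
      (Finsupp.lapply [] : OrderedChain V →ₗ[ZMod 2] ZMod 2) :=
    hom_ext fun l => by cases l <;> simp [antipode]
  exact LinearMap.congr_fun h c

lemma cup_add_antipode {s : V → ZMod 2} {φ : OrderedChain V →ₗ[ZMod 2] ZMod 2} {A : Set V}
    (hs : ∀ v ∈ A, s (-v) = s v + 1) (hφ_nil : φ (simplex []) = 0)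
    (hφ : ∀ c ∈ chainsIn A, φ (antipode c) = φ c) {c : OrderedChain V} (hc : c ∈ chainsIn A) :
    cup s φ (c + antipode c) = φ c := by
  refine eq_of_mem_chainsOn (f := cup s φ ∘ₗ (LinearMap.id + antipode)) (fun l hl => ?_) hc
  have hφ_l : φ (antipode (simplex l)) = φ (simplex l) := hφ _ (simplex_mem_chainsIn hl)
  cases l with
  | nil => simp [antipode, cup_simplex_nil, hφ_nil]
  | cons v l =>
    simp only [antipode, map_simplex, List.map_cons] at hφ_l
    simp only [LinearMap.comp_apply, LinearMap.add_apply, LinearMap.id_apply, map_add, antipode,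
      map_simplex, List.map_cons, cup_simplex_cons, hφ_l, hs v (hl v List.mem_cons_self)]
    linear_combination CharTwo.add_self_eq_zero (s v * φ (simplex (v :: l)))

lemma coboundaryCup_antipode {ss : List (V → ZMod 2)} {A : Set V}
    (hss : ∀ s ∈ ss, ∀ v ∈ A, s (-v) = s v + 1) {c : OrderedChain V} (hc : c ∈ chainsIn A) :
    coboundaryCup ss (antipode c) = coboundaryCup ss c := by
  induction ss generalizing c with
  | nil => rw [coboundaryCup_nil, coboundaryCup_nil, boundary_antipode, antipode_apply_nil]
  | cons s ss ih =>
    obtain ⟨hs, hss⟩ := List.forall_mem_cons.1 hss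
    have h := cup_add_antipode hs (coboundaryCup_simplex_nil ss) (fun _ => ih hss)
      (boundary_mem_chainsIn hc)
    rw [coboundaryCup_boundary, map_add] at h
    rw [coboundaryCup_cons, coboundaryCup_cons, boundary_antipode, CharTwo.add_eq_zero.1 h]

/-- Chains that bound one another like the upper hemispheres of the spheres `S⁰ ⊂ S¹ ⊂ ⋯`: the
boundary of the `(k+1)`-st is the `k`-sphere formed by the `k`-th and its antipode. -/
structure IsHemisphereSequence (h : ℕ → OrderedChain V) : Prop where
  boundary_zero : boundary (h 0) = simplex []
  boundary_succ (k : ℕ) : boundary (h (k + 1)) = h k + antipode (h k)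

/- The parity argument behind Borsuk–Ulam: `s ⌣ φ` evaluated on the sphere `h k + antipode (h k)`
counts `φ` on one hemisphere, since `s` takes the value `1` at exactly one of `v` and `-v`. -/
lemma IsHemisphereSequence.coboundaryCup_eq_one {h : ℕ → OrderedChain V}
    (hh : IsHemisphereSequence h) {ss : List (V → ZMod 2)} {A : Set V}
    (hss : ∀ s ∈ ss, ∀ v ∈ A, s (-v) = s v + 1) (hA : ∀ k < ss.length, h k ∈ chainsIn A) :
    coboundaryCup ss (h ss.length) = 1 := by
  induction ss with
  | nil => simp [coboundaryCup_nil, hh.boundary_zero]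
  | cons s ss ih =>
    obtain ⟨hs, hss⟩ := List.forall_mem_cons.1 hss
    rw [List.length_cons, coboundaryCup_cons, hh.boundary_succ,
      cup_add_antipode hs (coboundaryCup_simplex_nil ss) (fun _ => coboundaryCup_antipode hss)
        (hA _ (by simp))]
    exact ih hss fun k hk => hA k (hk.trans (Nat.lt_succ_self _))

end Antipode

section CrossPolytope

variable {V : Type*} [InvolutiveNeg V]

/-- The boundary of the cross-polytope with vertices `±e 0, …, ±e (k - 1)`, a chain of
`(k - 1)`-dimensional simplices. -/
noncomputable def crossPolytope (e : ℕ → V) : ℕ → OrderedChain V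
  | 0 => simplex []
  | k + 1 => cone (e k) (crossPolytope e k) + cone (-e k) (crossPolytope e k)

/-- The half of `crossPolytope e (k + 1)` consisting of the simplices with vertex `e k`. -/
noncomputable def hemisphere (e : ℕ → V) (k : ℕ) : OrderedChain V :=
  cone (e k) (crossPolytope e k)

lemma boundary_crossPolytope (e : ℕ → V) (k : ℕ) : boundary (crossPolytope e k) = 0 := by
  induction k with
  | zero => simp [crossPolytope]
  | succ k ih =>
    rw [crossPolytope, map_add, boundary_cone, boundary_cone, ih, map_zero, map_zero, add_zero,
      ZModModule.add_self]

lemma antipode_crossPolytope (e : ℕ → V) (k : ℕ) :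
    antipode (crossPolytope e k) = crossPolytope e k := by
  induction k with
  | zero => simp [crossPolytope, antipode]
  | succ k ih => rw [crossPolytope, map_add, antipode_cone, antipode_cone, ih, neg_neg, add_comm]

lemma isHemisphereSequence_hemisphere (e : ℕ → V) : IsHemisphereSequence (hemisphere e) where
  boundary_zero := by simp [hemisphere, crossPolytope, boundary_simplex_cons]
  boundary_succ k := by
    rw [hemisphere, boundary_cone, boundary_crossPolytope, map_zero, add_zero, hemisphere,
      antipode_cone, antipode_crossPolytope, crossPolytope]

end CrossPolytope

section SignedFaces

variable {V : Type*} [AddCommGroup V]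

/-- The ordered simplices with `k` vertices taken from `ε 0 • e 0, …, ε (k - 1) • e (k - 1)` for
some choice of signs `ε`. -/
def signedFaces (e : ℕ → V) (k : ℕ) : Set (List V) :=
  {l | l.length = k ∧ ∃ ε : ℕ → ℤˣ, ∀ v ∈ l, ∃ j < k, v = ε j • e j}

lemma cone_mem_chainsOn_signedFaces {e : ℕ → V} {k : ℕ} (u : ℤˣ) {c : OrderedChain V}
    (hc : c ∈ chainsOn (signedFaces e k)) :
    cone (u • e k) c ∈ chainsOn (signedFaces e (k + 1)) := by
  refine map_mem_of_mem_chainsOn (fun l hl => ?_) hc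
  obtain ⟨hlength, ε, hε⟩ := hl
  rw [cone_simplex]
  refine Finsupp.single_mem_supported _ _ ⟨by simp [hlength], Function.update ε k u, ?_⟩
  refine List.forall_mem_cons.2 ⟨⟨k, k.lt_succ_self, by simp⟩, fun v hv => ?_⟩
  obtain ⟨j, hj, rfl⟩ := hε v hv
  exact ⟨j, hj.trans k.lt_succ_self, by simp [hj.ne]⟩

lemma crossPolytope_mem_chainsOn (e : ℕ → V) (k : ℕ) :
    crossPolytope e k ∈ chainsOn (signedFaces e k) := by
  induction k with
  | zero => exact Finsupp.single_mem_supported _ _ ⟨rfl, 1, by simp⟩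
  | succ k ih =>
    refine add_mem ?_ ?_
    · simpa using cone_mem_chainsOn_signedFaces 1 ih
    · simpa using cone_mem_chainsOn_signedFaces (-1) ih

lemma hemisphere_mem_chainsOn (e : ℕ → V) (k : ℕ) :
    hemisphere e k ∈ chainsOn (signedFaces e (k + 1)) := by
  simpa [hemisphere] using cone_mem_chainsOn_signedFaces 1 (crossPolytope_mem_chainsOn e k)

end SignedFaces

section Subdivision

variable {V W : Type*} [AddCommGroup V] [Module ℝ V] [AddCommGroup W] [Module ℝ W]

/-- The barycenter of the vertices of an ordered simplex, counted with multiplicity. -/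
noncomputable def barycenter (l : List V) : V := (l.length : ℝ)⁻¹ • l.sum

lemma barycenter_map (f : V →ₗ[ℝ] W) (l : List V) :
    barycenter (l.map f) = f (barycenter l) := by
  simp [barycenter, map_list_sum]

lemma barycenter_eq_sum (l : List V) :
    barycenter l = ∑ i : Fin l.length, (l.length : ℝ)⁻¹ • l[i] := by
  rw [barycenter, ← Finset.smul_sum]
  simp

lemma barycenter_mem_convexHull {l : List V} (hl : l ≠ []) :
    barycenter l ∈ convexHull ℝ {v | v ∈ l} := by
  have hlength : (l.length : ℝ) ≠ 0 := by simpa using hl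
  rw [barycenter_eq_sum]
  refine (convex_convexHull ℝ _).sum_mem (fun _ _ => by positivity) ?_ fun i _ =>
    subset_convexHull ℝ _ (List.getElem_mem i.2)
  simp [hlength]

/-- The barycentric subdivision of an ordered simplex: the cone from its barycenter over the
subdivision of its boundary. -/
noncomputable def subdivideSimplex : List V → OrderedChain V
  | [] => simplex []
  | v :: l => cone (barycenter (v :: l))
      (∑ i : Fin (l.length + 1), subdivideSimplex ((v :: l).eraseIdx i))
termination_by l => l.length
decreasing_by
  rw [List.length_eraseIdx_of_lt i.2]
  simp

/-- Barycentric subdivision of chains. -/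
noncomputable def subdivision : OrderedChain V →ₗ[ZMod 2] OrderedChain V :=
  Finsupp.linearCombination (ZMod 2) subdivideSimplex

@[simp]
lemma subdivision_simplex_nil : subdivision (simplex ([] : List V)) = simplex [] := by
  simp [subdivision, subdivideSimplex]

lemma subdivision_simplex {l : List V} (hl : l ≠ []) :
    subdivision (simplex l) = cone (barycenter l) (subdivision (boundary (simplex l))) := by
  obtain ⟨v, l, rfl⟩ := List.exists_cons_of_ne_nil hl
  simp [subdivision, subdivideSimplex, boundary_simplex]

lemma subdivision_simplex_mem_chainsOn {P : List V → Set (List V)} (h_nil : [] ∈ P [])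
    (h_cons : ∀ l ≠ [], ∀ l' : List V, l'.Sublist l → l'.length < l.length →
      ∀ m ∈ P l', barycenter l :: m ∈ P l) (l : List V) :
    subdivision (simplex l) ∈ chainsOn (P l) := by
  induction hn : l.length using Nat.strong_induction_on generalizing l with
  | _ n ih =>
    subst hn
    rcases eq_or_ne l [] with rfl | hl
    · simpa using Finsupp.single_mem_supported _ _ h_nil
    rw [subdivision_simplex hl]
    refine map_mem_of_mem_chainsOn (f := cone (barycenter l) ∘ₗ subdivision) (fun l' hl' => ?_)
      (boundary_simplex_mem_chainsOn l)
    refine map_mem_of_mem_chainsOn (f := cone _) (fun m hm => ?_) (ih _ hl'.2 l' rfl)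
    rw [cone_simplex]
    exact Finsupp.single_mem_supported _ _ (h_cons l hl l' hl'.1 hl'.2 m hm)

lemma boundary_subdivision (c : OrderedChain V) :
    boundary (subdivision c) = subdivision (boundary c) := by
  suffices h : boundary ∘ₗ subdivision (V := V) = subdivision ∘ₗ boundary from
    LinearMap.congr_fun h c
  refine hom_ext_of_boundary fun l ih => ?_
  rcases eq_or_ne l [] with rfl | hl
  · simp
  simp only [LinearMap.comp_apply, boundary_boundary, map_zero] at ih ⊢
  rw [subdivision_simplex hl, boundary_cone, ih, map_zero, add_zero]

lemma subdivision_map (f : V →ₗ[ℝ] W) (c : OrderedChain V) :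
    subdivision (map f c) = map f (subdivision c) := by
  suffices h : subdivision ∘ₗ map f = map f ∘ₗ subdivision from LinearMap.congr_fun h c
  refine hom_ext_of_boundary fun l ih => ?_
  rcases eq_or_ne l [] with rfl | hl
  · simp
  have hl_map : l.map f ≠ [] := by simpa using hl
  simp only [LinearMap.comp_apply] at ih ⊢
  rw [map_simplex, subdivision_simplex hl_map, ← map_simplex, boundary_map, ih, barycenter_map,
    subdivision_simplex hl, map_cone]

lemma subdivision_antipode (c : OrderedChain V) :
    subdivision (antipode c) = antipode (subdivision c) :=
  subdivision_map (-LinearMap.id) c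

lemma IsHemisphereSequence.subdivision {h : ℕ → OrderedChain V} (hh : IsHemisphereSequence h) :
    IsHemisphereSequence fun k => subdivision (h k) where
  boundary_zero := by rw [boundary_subdivision, hh.boundary_zero, subdivision_simplex_nil]
  boundary_succ k := by
    rw [boundary_subdivision, hh.boundary_succ, map_add, subdivision_antipode]

lemma IsHemisphereSequence.iterate_subdivision {h : ℕ → OrderedChain V}
    (hh : IsHemisphereSequence h) (N : ℕ) :
    IsHemisphereSequence fun k => OrderedChain.subdivision^[N] (h k) := by
  induction N with
  | zero => exact hh
  | succ N ih => simpa only [Function.iterate_succ_apply'] using ih.subdivision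

end Subdivision

lemma one_sub_inv_mul_diam_le {X : Type*} [PseudoMetricSpace X] {l : List X} {n : ℕ} {δ : ℝ}
    (hn : l.length ≤ n) (hδ : Metric.diam {v | v ∈ l} ≤ δ) :
    (1 - (l.length : ℝ)⁻¹) * Metric.diam {v | v ∈ l} ≤ (1 - (n : ℝ)⁻¹) * δ := by
  have h_nonneg : 0 ≤ 1 - (n : ℝ)⁻¹ := sub_nonneg.2 (Nat.cast_inv_le_one _)
  rcases eq_or_ne l [] with rfl | hl
  · simpa using mul_nonneg h_nonneg (Metric.diam_nonneg.trans hδ)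
  have : 0 < l.length := List.length_pos_iff.2 hl
  gcongr

section SmallSimplices

variable {V : Type*} [SeminormedAddCommGroup V] [NormedSpace ℝ V]

lemma dist_barycenter_le {l : List V} {v : V} (hv : v ∈ l) :
    dist v (barycenter l) ≤ (1 - (l.length : ℝ)⁻¹) * Metric.diam {v | v ∈ l} := by
  obtain ⟨j, hj, rfl⟩ := List.getElem_of_mem hv
  let i₀ : Fin l.length := ⟨j, hj⟩
  have hlength : (l.length : ℝ) ≠ 0 := by exact_mod_cast (Nat.zero_lt_of_lt hj).ne'
  have hsub : l[i₀] - barycenter l = (l.length : ℝ)⁻¹ • ∑ i : Fin l.length, (l[i₀] - l[i]) := by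
    simp [barycenter, Finset.sum_sub_distrib, smul_sub, ← Nat.cast_smul_eq_nsmul ℝ, smul_smul,
      hlength]
  have hdist (i : Fin l.length) : ‖l[i₀] - l[i]‖ ≤ Metric.diam {v | v ∈ l} := by
    rw [← dist_eq_norm]
    exact Metric.dist_le_diam_of_mem l.finite_toSet.isBounded (List.getElem_mem _)
      (List.getElem_mem _)
  calc dist l[i₀] (barycenter l)
      = (l.length : ℝ)⁻¹ * ‖∑ i ∈ Finset.univ.erase i₀, (l[i₀] - l[i])‖ := by
        rw [dist_eq_norm, hsub, norm_smul, Finset.sum_erase _ (sub_self _)]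
        simp
    _ ≤ (l.length : ℝ)⁻¹ * ∑ _i ∈ Finset.univ.erase i₀, Metric.diam {v | v ∈ l} := by
        gcongr
        exact norm_sum_le_of_le _ fun i _ => hdist i
    _ = (1 - (l.length : ℝ)⁻¹) * Metric.diam {v | v ∈ l} := by
        rw [Finset.sum_const, Finset.card_erase_of_mem (Finset.mem_univ _), Finset.card_univ,
          Fintype.card_fin, nsmul_eq_mul, Nat.cast_pred (Nat.zero_lt_of_lt hj)]
        field_simp

lemma dist_barycenter_le_of_mem_convexHull {l : List V} {x : V}
    (hx : x ∈ convexHull ℝ {v | v ∈ l}) :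
    dist x (barycenter l) ≤ (1 - (l.length : ℝ)⁻¹) * Metric.diam {v | v ∈ l} :=
  convexHull_min (t := Metric.closedBall _ _) (fun _ => dist_barycenter_le)
    (convex_closedBall _ _) hx

/-- The ordered simplices with at most `n` vertices and of diameter at most `δ` whose convex hull is
contained in `S`. -/
def smallSimplices (S : Set V) (n : ℕ) (δ : ℝ) : Set (List V) :=
  {l | l.length ≤ n ∧ Metric.diam {v | v ∈ l} ≤ δ ∧ convexHull ℝ {v | v ∈ l} ⊆ S}

lemma mem_of_mem_smallSimplices {S : Set V} {n : ℕ} {δ : ℝ} {l : List V}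
    (hl : l ∈ smallSimplices S n δ) {v : V} (hv : v ∈ l) : v ∈ S :=
  hl.2.2 (subset_convexHull ℝ _ hv)

lemma dist_le_of_mem_smallSimplices {S : Set V} {n : ℕ} {δ : ℝ} {l : List V}
    (hl : l ∈ smallSimplices S n δ) {u v : V} (hu : u ∈ l) (hv : v ∈ l) : dist u v ≤ δ :=
  (Metric.dist_le_diam_of_mem l.finite_toSet.isBounded hu hv).trans hl.2.1

lemma cons_barycenter_mem_smallSimplices {l l' m : List V} (hl : l ≠ []) (hsub : l'.Sublist l)
    (hlength : l'.length < l.length)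
    (hm : m ∈ smallSimplices (convexHull ℝ {v | v ∈ l'}) l'.length
      ((1 - (l'.length : ℝ)⁻¹) * Metric.diam {v | v ∈ l'})) :
    barycenter l :: m ∈ smallSimplices (convexHull ℝ {v | v ∈ l}) l.length
      ((1 - (l.length : ℝ)⁻¹) * Metric.diam {v | v ∈ l}) := by
  have hm_hull {v : V} (hv : v ∈ m) : v ∈ convexHull ℝ {v | v ∈ l} :=
    convexHull_mono hsub.subset (mem_of_mem_smallSimplices hm hv)
  have h_nonneg : 0 ≤ (1 - (l.length : ℝ)⁻¹) * Metric.diam {v | v ∈ l} :=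
    mul_nonneg (sub_nonneg.2 (Nat.cast_inv_le_one _)) Metric.diam_nonneg
  have hdiam : Metric.diam {v | v ∈ l'} ≤ Metric.diam {v | v ∈ l} :=
    Metric.diam_mono hsub.subset l.finite_toSet.isBounded
  refine ⟨hm.1.trans_lt hlength, Metric.diam_le_of_forall_dist_le h_nonneg ?_, ?_⟩
  · rintro u hu v hv
    rcases List.mem_cons.1 hu with rfl | hu <;> rcases List.mem_cons.1 hv with rfl | hv
    · simpa using h_nonneg
    · rw [dist_comm]
      exact dist_barycenter_le_of_mem_convexHull (hm_hull hv)
    · exact dist_barycenter_le_of_mem_convexHull (hm_hull hu)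
    · exact (dist_le_of_mem_smallSimplices hm hu hv).trans
        (one_sub_inv_mul_diam_le hsub.length_le hdiam)
  · refine convexHull_min (fun v hv => ?_) (convex_convexHull ℝ _)
    rcases List.mem_cons.1 hv with rfl | hv
    exacts [barycenter_mem_convexHull hl, hm_hull hv]

lemma subdivision_mem_chainsOn_smallSimplices {S : Set V} {n : ℕ} {δ : ℝ} {c : OrderedChain V}
    (hc : c ∈ chainsOn (smallSimplices S n δ)) :
    subdivision c ∈ chainsOn (smallSimplices S n ((1 - (n : ℝ)⁻¹) * δ)) := by
  refine map_mem_of_mem_chainsOn (fun l hl => ?_) hc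
  refine Finsupp.supported_mono ?_ (subdivision_simplex_mem_chainsOn
    (P := fun l => smallSimplices (convexHull ℝ {v | v ∈ l}) l.length
      ((1 - (l.length : ℝ)⁻¹) * Metric.diam {v | v ∈ l})) (by simp [smallSimplices])
    (fun l hl l' hsub hlength m hm => cons_barycenter_mem_smallSimplices hl hsub hlength hm) l)
  rintro m ⟨hm_length, hm_diam, hm_hull⟩
  exact ⟨hm_length.trans hl.1, hm_diam.trans (one_sub_inv_mul_diam_le hl.1 hl.2.1),
    hm_hull.trans hl.2.2⟩

lemma iterate_subdivision_mem_chainsOn {S : Set V} {n : ℕ} {δ : ℝ} {c : OrderedChain V}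
    (hc : c ∈ chainsOn (smallSimplices S n δ)) (N : ℕ) :
    subdivision^[N] c ∈ chainsOn (smallSimplices S n ((1 - (n : ℝ)⁻¹) ^ N * δ)) := by
  induction N with
  | zero => simpa using hc
  | succ N ih =>
    rw [Function.iterate_succ_apply', pow_succ', mul_assoc]
    exact subdivision_mem_chainsOn_smallSimplices ih

lemma mem_chainsIn_of_mem_chainsOn_smallSimplices {S : Set V} {n : ℕ} {δ : ℝ} {c : OrderedChain V}
    (hc : c ∈ chainsOn (smallSimplices S n δ)) : c ∈ chainsIn S :=
  Finsupp.supported_mono (t := {l | ∀ v ∈ l, v ∈ S})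
    (fun _ hl _ hv => mem_of_mem_smallSimplices hl hv) hc

lemma coboundaryCup_eq_zero_of_mem_chainsOn_smallSimplices {ss : List (V → ZMod 2)} {S : Set V}
    {n : ℕ} {δ : ℝ} (hss : ∀ v ∈ S, ∃ s ∈ ss, ∃ a, ∀ w ∈ Metric.closedBall v δ, s w = a)
    {c : OrderedChain V} (hc : c ∈ chainsOn (smallSimplices S n δ)) :
    coboundaryCup ss c = 0 := by
  refine eq_of_mem_chainsOn (g := 0) (fun l hl => ?_) hc
  cases l with
  | nil => exact coboundaryCup_simplex_nil _
  | cons v l =>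
    exact coboundaryCup_eq_zero (hss v (mem_of_mem_smallSimplices hl List.mem_cons_self))
      (simplex_mem_chainsIn fun w hw => dist_le_of_mem_smallSimplices hl hw List.mem_cons_self)

end SmallSimplices

lemma zero_notMem_convexHull_range {ι V : Type*} [AddCommGroup V] [Module ℝ V] {v : ι → V}
    (hv : LinearIndependent ℝ v) : 0 ∉ convexHull ℝ (Set.range v) := by
  rw [convexHull_range_eq_exists_affineCombination]
  rintro ⟨s, w, -, hw_sum, hw⟩
  rw [s.affineCombination_eq_linear_combination v w hw_sum] at hw
  have hw_zero : ∑ i ∈ s, w i = 0 :=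
    Finset.sum_eq_zero fun i hi => linearIndependent_iff'.1 hv s w hw i hi
  exact zero_ne_one (hw_zero.symm.trans hw_sum)

section CrossPolytopeSurface

variable {V : Type*} [SeminormedAddCommGroup V] [NormedSpace ℝ V]

/-- The boundary of the cross-polytope with vertices `±e 0, …, ±e (n - 1)`, as a set. -/
def crossPolytopeSurface (e : ℕ → V) (n : ℕ) : Set V :=
  ⋃ ε : Fin n → ℤˣ, convexHull ℝ (Set.range fun i : Fin n => ε i • e i)

lemma isCompact_crossPolytopeSurface (e : ℕ → V) (n : ℕ) :
    IsCompact (crossPolytopeSurface e n) :=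
  isCompact_iUnion fun _ => (Set.finite_range _).isCompact_convexHull ℝ

lemma zero_notMem_crossPolytopeSurface {e : ℕ → V} {n : ℕ}
    (he : LinearIndependent ℝ fun i : Fin n => e i) : 0 ∉ crossPolytopeSurface e n := by
  rw [crossPolytopeSurface, Set.mem_iUnion, not_exists]
  exact fun ε => zero_notMem_convexHull_range (he.group_smul ε)

lemma signedFaces_subset_smallSimplices (e : ℕ → V) {k n : ℕ} (hk : k ≤ n) :
    signedFaces e k ⊆
      smallSimplices (crossPolytopeSurface e n) n (Metric.diam (crossPolytopeSurface e n)) := by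
  rintro l ⟨hlength, ε, hε⟩
  have hvert : {v | v ∈ l} ⊆ Set.range fun i : Fin n => ε i • e i := fun v hv => by
    obtain ⟨j, hj, rfl⟩ := hε v hv
    exact ⟨⟨j, hj.trans_le hk⟩, rfl⟩
  have hhull : convexHull ℝ {v | v ∈ l} ⊆ crossPolytopeSurface e n :=
    (convexHull_mono hvert).trans
      (Set.subset_iUnion (fun ε : Fin n → ℤˣ => convexHull ℝ (Set.range fun i => ε i • e i))
        fun i => ε i)
  exact ⟨hlength.trans_le hk, Metric.diam_mono ((subset_convexHull ℝ _).trans hhull)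
    (isCompact_crossPolytopeSurface e n).isBounded, hhull⟩

lemma exists_isHemisphereSequence_mem_chainsOn_smallSimplices (e : ℕ → V) {n : ℕ} (hn : n ≠ 0)
    {δ : ℝ} (hδ : 0 < δ) : ∃ h : ℕ → OrderedChain V, IsHemisphereSequence h ∧
      ∀ k < n, h k ∈ chainsOn (smallSimplices (crossPolytopeSurface e n) n δ) := by
  have hlim : Filter.Tendsto
      (fun N : ℕ => (1 - (n : ℝ)⁻¹) ^ N * Metric.diam (crossPolytopeSurface e n))
      Filter.atTop (nhds 0) := by
    have hratio : 1 - (n : ℝ)⁻¹ < 1 := sub_lt_self 1 (by positivity)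
    simpa using (tendsto_pow_atTop_nhds_zero_of_lt_one
      (sub_nonneg.2 (Nat.cast_inv_le_one n)) hratio).mul_const
        (Metric.diam (crossPolytopeSurface e n))
  obtain ⟨N, hN⟩ := (hlim.eventually_le_const hδ).exists
  refine ⟨_, (isHemisphereSequence_hemisphere e).iterate_subdivision N, fun k hk => ?_⟩
  have hmem := Finsupp.supported_mono (signedFaces_subset_smallSimplices e hk)
    (hemisphere_mem_chainsOn e k)
  refine Finsupp.supported_mono ?_ (iterate_subdivision_mem_chainsOn hmem N)
  exact fun l hl => ⟨hl.1, hl.2.1.trans hN, hl.2.2⟩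

end CrossPolytopeSurface

end OrderedChain

section BorsukUlam

open OrderedChain

/- Where `f` vanishes, a well-order of `V` decides between `v` and `-v`. -/
lemma exists_zmod_two_sign {V : Type*} [AddGroup V] [IsAddTorsionFree V] {f : V → ℝ}
    (hf : ∀ v, f (-v) = -f v) :
    ∃ s : V → ZMod 2, (∀ v ≠ 0, s (-v) = s v + 1) ∧ (∀ v, 0 < f v → s v = 1) ∧
      ∀ v, f v < 0 → s v = 0 := by
  classical
  refine ⟨fun v => if 0 < f v ∨ f v = 0 ∧ WellOrderingRel v (-v) then 1 else 0,
    fun v hv => ?_, fun v hv => if_pos (.inl hv), fun v hv => if_neg (by grind)⟩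
  have hv_neg : v ≠ -v := mt self_eq_neg.1 hv
  simp only [hf, neg_neg, Left.neg_pos_iff, neg_eq_zero]
  rcases lt_trichotomy (f v) 0 with h | h | h
  · simp [h, h.not_gt, h.ne]
  · rcases trichotomous_of WellOrderingRel v (-v) with h' | h' | h'
    · simp [h, h', asymm_of WellOrderingRel h']; rfl
    · exact absurd h' hv_neg
    · simp [h, h', asymm_of WellOrderingRel h']
  · simp [h, h.not_gt, h.ne']; rfl

lemma exists_pos_ball_constant_sign {X ι : Type*} [PseudoMetricSpace X] {g : X → ι → ℝ}
    {K U : Set X} (hK : IsCompact K) (hU : IsOpen U) (hKU : K ⊆ U) (hg : ContinuousOn g U)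
    (hne : ∀ x ∈ K, g x ≠ 0) :
    ∃ δ > 0, ∀ x ∈ K, ∃ i,
      (∀ y ∈ Metric.closedBall x δ, 0 < g y i) ∨ ∀ y ∈ Metric.closedBall x δ, g y i < 0 := by
  let c : ι ⊕ ι → Set X :=
    Sum.elim (fun i => U ∩ (g · i) ⁻¹' Set.Ioi 0) (fun i => U ∩ (g · i) ⁻¹' Set.Iio 0)
  have hc_open : ∀ j, IsOpen (c j) := Sum.rec
    (fun i => (continuousOn_pi.1 hg i).isOpen_inter_preimage hU isOpen_Ioi)
    (fun i => (continuousOn_pi.1 hg i).isOpen_inter_preimage hU isOpen_Iio)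
  have hc_cover : K ⊆ ⋃ j, c j := fun x hx => by
    obtain ⟨i, hi⟩ := Function.ne_iff.1 (hne x hx)
    rcases lt_or_gt_of_ne hi with hi | hi
    exacts [Set.mem_iUnion.2 ⟨.inr i, hKU hx, hi⟩, Set.mem_iUnion.2 ⟨.inl i, hKU hx, hi⟩]
  obtain ⟨δ, hδ, hball⟩ := lebesgue_number_lemma_of_metric hK hc_open hc_cover
  refine ⟨δ / 2, half_pos hδ, fun x hx => ?_⟩
  have hsub : Metric.closedBall x (δ / 2) ⊆ Metric.ball x δ :=
    Metric.closedBall_subset_ball (half_lt_self hδ)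
  obtain ⟨i | i, hi⟩ := hball x hx
  exacts [⟨i, .inl fun y hy => (hi (hsub hy)).2⟩, ⟨i, .inr fun y hy => (hi (hsub hy)).2⟩]

theorem borsuk_ulam {V : Type*} [NormedAddCommGroup V] [NormedSpace ℝ V] {n : ℕ}
    (hn : n < Module.finrank ℝ V) {g : V → Fin n → ℝ} (hodd : ∀ v, g (-v) = -g v)
    (hcont : ContinuousOn g {0}ᶜ) : ∃ v ≠ 0, g v = 0 := by
  by_contra! hne
  obtain ⟨e', he'⟩ := exists_linearIndependent_of_le_finrank (Nat.succ_le_of_lt hn)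
  let e (k : ℕ) : V := e' (Fin.ofNat (n + 1) k)
  have he : LinearIndependent ℝ fun i : Fin (n + 1) => e i := by simpa [e] using he'
  have hS : crossPolytopeSurface e (n + 1) ⊆ {0}ᶜ :=
    Set.subset_compl_singleton_iff.2 (zero_notMem_crossPolytopeSurface he)
  obtain ⟨δ, hδ, hsign⟩ := exists_pos_ball_constant_sign
    (isCompact_crossPolytopeSurface e (n + 1)) isOpen_compl_singleton hS hcont
    fun x hx => hne x (hS hx)
  obtain ⟨h, hh, hsmall⟩ := exists_isHemisphereSequence_mem_chainsOn_smallSimplices e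
    n.succ_ne_zero hδ
  have : IsAddTorsionFree V := .of_isTorsionFree ℝ V
  choose s hs_odd hs_pos hs_neg using fun i => exists_zmod_two_sign (f := (g · i))
    fun v => by simp [hodd v]
  have h_one : coboundaryCup (List.ofFn s) (h (List.ofFn s).length) = 1 :=
    hh.coboundaryCup_eq_one (List.forall_mem_ofFn_iff.2 fun i v hv => hs_odd i v (hS hv))
      fun k hk => mem_chainsIn_of_mem_chainsOn_smallSimplices <|
        hsmall k (hk.trans (by simp))
  have h_zero : coboundaryCup (List.ofFn s) (h n) = 0 := by
    refine coboundaryCup_eq_zero_of_mem_chainsOn_smallSimplices (fun v hv => ?_)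
      (hsmall n n.lt_succ_self)
    obtain ⟨i, hi⟩ := hsign v hv
    refine ⟨s i, List.mem_ofFn.2 ⟨i, rfl⟩, ?_⟩
    rcases hi with hi | hi
    exacts [⟨1, fun w hw => hs_pos i w (hi w hw)⟩, ⟨0, fun w hw => hs_neg i w (hi w hw)⟩]
  rw [List.length_ofFn, h_zero] at h_one
  exact zero_ne_one h_one

end BorsukUlam

section HamSandwich

variable {X : Type*} [MeasurableSpace X]

lemma continuousAt_measureReal_nonneg {C : Type*} [TopologicalSpace C] [FirstCountableTopology C]
    {μ : Measure X} [IsFiniteMeasure μ] {F : C → X → ℝ} (hF : ∀ c, Measurable (F c)) {c₀ : C}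
    (hcont : ∀ x, ContinuousAt (F · x) c₀) (hne : ∀ᵐ x ∂μ, F c₀ x ≠ 0) :
    ContinuousAt (fun c => μ.real {x | 0 ≤ F c x}) c₀ := by
  have hmeas (c : C) : MeasurableSet {x | 0 ≤ F c x} := measurableSet_le measurable_const (hF c)
  refine (ENNReal.tendsto_toReal (measure_ne_top _ _)).comp <|
    tendsto_measure_of_ae_tendsto_indicator_of_isFiniteMeasure _ (hmeas c₀) hmeas ?_
  filter_upwards [hne] with x hx
  rcases hx.lt_or_gt with hx | hx
  · filter_upwards [(hcont x).eventually_lt_const hx] with c hc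
    exact iff_of_false hc.not_ge hx.not_ge
  · filter_upwards [(hcont x).eventually_const_lt hx] with c hc
    exact iff_of_true hc.le hx.le

theorem exists_ne_zero_forall_measure_nonneg_eq_measure_nonpos {W : Type*} [AddCommGroup W]
    [Module ℝ W] {n : ℕ} (hn : n < Module.finrank ℝ W) (Φ : W →ₗ[ℝ] X → ℝ)
    (hΦ : ∀ w, Measurable (Φ w)) (μ : Fin n → Measure X) [∀ i, IsFiniteMeasure (μ i)]
    (hne : ∀ i, ∀ w ≠ 0, ∀ᵐ x ∂μ i, Φ w x ≠ 0) :
    ∃ w ≠ 0, ∀ i, μ i {x | 0 ≤ Φ w x} = μ i {x | Φ w x ≤ 0} := by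
  obtain ⟨e, he⟩ := exists_linearIndependent_of_le_finrank (Nat.succ_le_of_lt hn)
  let L : (Fin (n + 1) → ℝ) →ₗ[ℝ] W := Fintype.linearCombination ℝ e
  have hL {c : Fin (n + 1) → ℝ} (hc : c ≠ 0) : L c ≠ 0 :=
    (map_ne_zero_iff L (linearIndependent_iff_injective_fintypeLinearCombination.1 he)).2 hc
  let N (i : Fin n) (c : Fin (n + 1) → ℝ) : ℝ := (μ i).real {x | 0 ≤ Φ (L c) x}
  have hN (i : Fin n) {c : Fin (n + 1) → ℝ} (hc : c ≠ 0) : ContinuousAt (N i) c :=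
    continuousAt_measureReal_nonneg (fun c => hΦ (L c))
      (fun x => (LinearMap.proj x ∘ₗ Φ ∘ₗ L).continuous_of_finiteDimensional.continuousAt)
      (hne i _ (hL hc))
  obtain ⟨c, hc, hc_zero⟩ := borsuk_ulam (g := fun c i => N i c - N i (-c)) (by simp)
    (fun c => by ext i; simp)
    (continuousOn_pi.2 fun i c hc => ((hN i hc).sub
      ((hN i (neg_ne_zero.2 hc)).comp continuousAt_neg)).continuousWithinAt)
  refine ⟨L c, hL hc, fun i => ?_⟩
  have h_real : (μ i).real {x | 0 ≤ Φ (L c) x} = (μ i).real {x | Φ (L c) x ≤ 0} := by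
    simpa [N] using sub_eq_zero.1 (congrFun hc_zero i)
  exact (measureReal_eq_measureReal_iff).1 h_real

end HamSandwich

section Polynomials

lemma ae_polynomial_eval_ne_zero {R : Type*} [CommRing R] [IsDomain R] [MeasurableSpace R]
    (μ : Measure R) [NullSingletonClass μ] {p : Polynomial R} (hp : p ≠ 0) :
    ∀ᵐ x ∂μ, p.eval x ≠ 0 := by
  rw [ae_iff]
  simpa using (Polynomial.finite_setOfPred_isRoot hp).measure_zero μ

/- Viewing `p` as a polynomial in its first variable, its leading coefficient is almost everywhere
nonzero by induction, and each slice on which it does not vanish is univariate. -/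
lemma ae_pi_mvPolynomial_eval_ne_zero {n : ℕ} (μ : Fin n → Measure ℝ) [∀ i, SigmaFinite (μ i)]
    [∀ i, NullSingletonClass (μ i)] {p : MvPolynomial (Fin n) ℝ} (hp : p ≠ 0) :
    ∀ᵐ x ∂Measure.pi μ, MvPolynomial.eval x p ≠ 0 := by
  induction n with
  | zero =>
    obtain ⟨a, rfl⟩ := MvPolynomial.C_surjective (Fin 0) p
    exact .of_forall fun x => by simpa using hp
  | succ n ih =>
    let q := MvPolynomial.finSuccEquiv ℝ n p
    have hq : q ≠ 0 := (map_ne_zero_iff _ (MvPolynomial.finSuccEquiv ℝ n).injective).2 hp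
    have hslice : ∀ᵐ y ∂Measure.pi (fun j => μ (Fin.succ j)), ∀ᵐ t ∂μ 0,
        MvPolynomial.eval (Fin.cons t y : Fin (n + 1) → ℝ) p ≠ 0 := by
      filter_upwards [ih (fun j => μ (Fin.succ j)) (Polynomial.leadingCoeff_ne_zero.2 hq)] with y hy
      have hqy : q.map (MvPolynomial.eval y) ≠ 0 := fun h => hy <| by
        simpa using congrArg (Polynomial.coeff · q.natDegree) h
      filter_upwards [ae_polynomial_eval_ne_zero (μ 0) hqy] with t ht
      rwa [MvPolynomial.eval_eq_eval_mv_eval']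
    have hmeas : MeasurableSet {z : ℝ × (Fin n → ℝ) |
        MvPolynomial.eval (Fin.cons z.1 z.2 : Fin (n + 1) → ℝ) p ≠ 0} :=
      (isOpen_ne_fun ((MvPolynomial.continuous_eval p).comp
        (continuous_fst.finCons continuous_snd)) continuous_const).measurableSet
    filter_upwards [(measurePreserving_piFinSuccAbove μ 0).quasiMeasurePreserving.ae
      ((Measure.ae_prod_iff_ae_ae hmeas).2 ((Measure.ae_ae_comm hmeas).2 hslice))] with x hx
    simpa using hx

lemma ae_mvPolynomial_eval_ne_zero {n : ℕ} {p : MvPolynomial (Fin n) ℝ} (hp : p ≠ 0) :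
    ∀ᵐ x : EuclideanSpace ℝ (Fin n), MvPolynomial.eval (x : Fin n → ℝ) p ≠ 0 :=
  (PiLp.volume_preserving_ofLp (Fin n)).quasiMeasurePreserving.ae
    (ae_pi_mvPolynomial_eval_ne_zero (fun _ => volume) hp)

/- The value at `none` is the slack in the inequality. -/
lemma card_sum_le_eq_choose (σ : Type*) [Fintype σ] (r : ℕ) :
    Nat.card {s : σ →₀ ℕ | s.sum (fun _ k => k) ≤ r} = (Fintype.card σ + r).choose r := by
  classical
  have hmem (s : Option σ →₀ ℕ) : s ∈ (Finset.univ : Finset (Option σ)).finsuppAntidiag r ↔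
      s none + s.some.sum (fun _ k => k) = r := by
    simp [Finsupp.sum_fintype]
  let slack : {s : σ →₀ ℕ | s.sum (fun _ k => k) ≤ r} ≃
      (Finset.univ : Finset (Option σ)).finsuppAntidiag r :=
    { toFun s := ⟨s.1.optionElim (r - s.1.sum fun _ k => k), (hmem _).2 <| by
        simpa using Nat.sub_add_cancel s.2⟩
      invFun s := ⟨s.1.some, ((hmem _).1 s.2).le.trans' (Nat.le_add_left _ _)⟩
      left_inv s := by simp
      right_inv s := Subtype.ext <| by
        have h_none : r - s.1.some.sum (fun _ k => k) = s.1 none :=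
          Nat.sub_eq_of_eq_add ((hmem _).1 s.2).symm
        simp [h_none] }
  rw [Nat.card_congr slack, Nat.card_eq_fintype_card, Fintype.card_coe,
    Finset.card_finsuppAntidiag_nat_eq_choose, Finset.card_univ, Fintype.card_option,
    Nat.add_right_comm, Nat.add_sub_cancel]

lemma finrank_restrictTotalDegree (σ R : Type*) [Fintype σ] [CommRing R] [Nontrivial R] (r : ℕ) :
    Module.finrank R (MvPolynomial.restrictTotalDegree σ R r) =
      (Fintype.card σ + r).choose r :=
  (Module.finrank_eq_nat_card_basis (MvPolynomial.basisRestrictSupport R _)).trans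
    (card_sum_le_eq_choose σ r)

end Polynomials

/-- The Stone–Tukey polynomial ham sandwich theorem. -/
theorem stone_tukey (d r : ℕ) (hd : 0 < d) (hr : 0 < r)
    (μ : Fin ((d + r).choose r - 1) → Measure (EuclideanSpace ℝ (Fin d)))
    (hfin : ∀ i, IsFiniteMeasure (μ i))
    (hac : ∀ i, μ i ≪ volume) :
    ∃ f : MvPolynomial (Fin d) ℝ, f ≠ 0 ∧ f.totalDegree ≤ r ∧
      ∀ i, μ i {x | 0 ≤ MvPolynomial.eval (x : Fin d → ℝ) f}
          = μ i {x | MvPolynomial.eval (x : Fin d → ℝ) f ≤ 0} := by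
  let P := MvPolynomial.restrictTotalDegree (Fin d) ℝ r
  let Φ : P →ₗ[ℝ] EuclideanSpace ℝ (Fin d) → ℝ :=
    (LinearMap.pi fun x => (MvPolynomial.aeval (x : Fin d → ℝ)).toLinearMap) ∘ₗ P.subtype
  have hdim : (d + r).choose r - 1 < Module.finrank ℝ P := by
    rw [finrank_restrictTotalDegree, Fintype.card_fin]
    exact Nat.sub_one_lt (Nat.choose_pos (Nat.le_add_left r d)).ne'
  have hmeas (f : P) : Measurable (Φ f) :=
    (MvPolynomial.continuous_eval f.1).measurable.comp (WithLp.measurable_ofLp 2 (Fin d → ℝ))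
  have hne (i) (f : P) (hf : f ≠ 0) : ∀ᵐ x ∂μ i, Φ f x ≠ 0 :=
    (hac i).ae_le (ae_mvPolynomial_eval_ne_zero (by simpa using hf))
  obtain ⟨f, hf, hbisect⟩ :=
    exists_ne_zero_forall_measure_nonneg_eq_measure_nonpos hdim Φ hmeas μ hne
  exact ⟨f, by simpa using hf, (MvPolynomial.mem_restrictTotalDegree _ _ _).1 f.2, hbisect⟩
end
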